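/- Suppose all roots of 𝔤 have the same length with respect to the Killing form (𝔤 is simply laced). Let μ and ν be dominant integral weights of 𝔤 such that ν̄ − μ is a root of 𝔤. Then the 𝔤-invariant subspace of adj(𝔤) ⊗ V_μ ⊗ V_ν has dimension exactly 1. -/

import Mathlib

open scoped TensorProduct Classical
open LieAlgebra LieModule Module

namespace AdjPaper

variable {L : Type} [LieRing L] [LieAlgebra ℂ L]

/-- `χ` is a root of `L` relative to the Cartan subalgebra `H`: a nonzero linear functional
on `H` with nontrivial root space. -/
def IsRoot (H : LieSubalgebra ℂ L) [H.IsCartanSubalgebra] (χ : Module.Dual ℂ H) : Prop :=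
  χ ≠ 0 ∧ rootSpace H ⇑χ ≠ ⊥

/-- `t` is the coroot `χ∨` of the root `χ`: it lies in `⁅𝔤_χ, 𝔤_{-χ}⁆` and satisfies
`χ t = 2`. -/
def IsCoroot (H : LieSubalgebra ℂ L) [H.IsCartanSubalgebra] (χ : Module.Dual ℂ H) (t : H) : Prop :=
  χ t = 2 ∧ ∃ e ∈ rootSpace H ⇑χ, ∃ f ∈ rootSpace H ⇑(-χ), (t : L) = ⁅e, f⁆

/-- `α` enumerates the simple roots of a base of the root system of `(L, H)`. -/
structure IsBase (H : LieSubalgebra ℂ L) [H.IsCartanSubalgebra] {r : ℕ} (α : Fin r → Module.Dual ℂ H) : Prop where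
  isRoot : ∀ j, IsRoot H (α j)
  indep : LinearIndependent ℂ α
  pos_neg : ∀ χ : Module.Dual ℂ H, IsRoot H χ →
    (∃ c : Fin r → ℕ, χ = ∑ j, (c j : ℂ) • α j) ∨ (∃ c : Fin r → ℕ, χ = -∑ j, (c j : ℂ) • α j)

/-- `χ` is a positive root relative to the base `α`. -/
def IsPosRoot (H : LieSubalgebra ℂ L) [H.IsCartanSubalgebra] {r : ℕ} (α : Fin r → Module.Dual ℂ H)
    (χ : Module.Dual ℂ H) : Prop :=
  IsRoot H χ ∧ ∃ c : Fin r → ℕ, χ = ∑ j, (c j : ℂ) • α j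

/-- A weight `μ` is dominant integral: all its pairings `⟨μ, α_j∨⟩ = μ (hc j)` with the
simple coroots `hc j` are non-negative integers. -/
def IsDomInt {H : LieSubalgebra ℂ L} {r : ℕ} (hc : Fin r → H) (μ : Module.Dual ℂ H) : Prop :=
  ∀ j, ∃ n : ℕ, μ (hc j) = (n : ℂ)

/-- `V` is an irreducible `L`-module with highest weight `μ` (relative to the Cartan
subalgebra `H` and the base `α`): it is irreducible and possesses a nonzero vector of
`H`-weight `μ` annihilated by all positive root spaces. -/
def IsHWIrrep (H : LieSubalgebra ℂ L) [H.IsCartanSubalgebra] {r : ℕ} (α : Fin r → Module.Dual ℂ H)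
    (μ : Module.Dual ℂ H) (V : Type) [AddCommGroup V] [Module ℂ V]
    [LieRingModule L V] [LieModule ℂ L V] : Prop :=
  IsSimpleOrder (LieSubmodule ℂ L V) ∧
  ∃ v : V, v ≠ 0 ∧ (∀ x : H, ⁅(x : L), v⁆ = μ x • v) ∧
    ∀ χ : Module.Dual ℂ H, IsPosRoot H α χ → ∀ e ∈ rootSpace H ⇑χ, ⁅e, v⁆ = 0

/-- `W` is isomorphic to the dual representation `V*`: there is a nondegenerate
`𝔤`-invariant pairing `W × V → ℂ`. -/
def IsDualPair (W V : Type) [AddCommGroup W] [Module ℂ W] [LieRingModule L W]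
    [AddCommGroup V] [Module ℂ V] [LieRingModule L V] : Prop :=
  ∃ B : W →ₗ[ℂ] V →ₗ[ℂ] ℂ,
    (∀ w, (∀ v, B w v = 0) → w = 0) ∧ (∀ v, (∀ w, B w v = 0) → v = 0) ∧
    ∀ (x : L) (w : W) (v : V), B ⁅x, w⁆ v + B w ⁅x, v⁆ = 0

/-- `V` is an orthogonal representation: it has a nondegenerate invariant symmetric
bilinear form. -/
def IsOrthogonalRep (V : Type) [AddCommGroup V] [Module ℂ V] [LieRingModule L V] : Prop :=
  ∃ B : V →ₗ[ℂ] V →ₗ[ℂ] ℂ,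
    (∀ v w, B v w = B w v) ∧ (∀ v, (∀ w, B v w = 0) → v = 0) ∧
    ∀ (x : L) (v w : V), B ⁅x, v⁆ w + B v ⁅x, w⁆ = 0

/-- `V` is a symplectic representation: it has a nondegenerate invariant alternating
bilinear form. -/
def IsSymplecticRep (V : Type) [AddCommGroup V] [Module ℂ V] [LieRingModule L V] : Prop :=
  ∃ B : V →ₗ[ℂ] V →ₗ[ℂ] ℂ,
    (∀ v, B v v = 0) ∧ (∀ v, (∀ w, B v w = 0) → v = 0) ∧
    ∀ (x : L) (v w : V), B ⁅x, v⁆ w + B v ⁅x, w⁆ = 0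

variable (L) in
/-- The operator on `adj(𝔤) ⊗ V ⊗ V` exchanging the two copies of `V`. -/
noncomputable def swapMap (V : Type) [AddCommGroup V] [Module ℂ V] :
    (L ⊗[ℂ] (V ⊗[ℂ] V)) →ₗ[ℂ] (L ⊗[ℂ] (V ⊗[ℂ] V)) :=
  LinearMap.lTensor L (TensorProduct.comm ℂ V V).toLinearMap

variable (L) in
/-- The `𝔤`-invariant subspace of `adj(𝔤) ⊗ S²V`, realised inside `adj(𝔤) ⊗ V ⊗ V` as the
invariant vectors fixed by the swap of the two copies of `V`. -/
noncomputable def symSquareInvariants (V : Type) [AddCommGroup V] [Module ℂ V]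
    [LieRingModule L V] [LieModule ℂ L V] : Submodule ℂ (L ⊗[ℂ] (V ⊗[ℂ] V)) :=
  (maxTrivSubmodule ℂ L (L ⊗[ℂ] (V ⊗[ℂ] V)) : Submodule ℂ (L ⊗[ℂ] (V ⊗[ℂ] V))) ⊓
    LinearMap.ker (swapMap L V - LinearMap.id)

variable (L) in
/-- The `𝔤`-invariant subspace of `adj(𝔤) ⊗ Λ²V`, realised inside `adj(𝔤) ⊗ V ⊗ V` as the
invariant vectors anti-fixed by the swap of the two copies of `V`. -/
noncomputable def altSquareInvariants (V : Type) [AddCommGroup V] [Module ℂ V]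
    [LieRingModule L V] [LieModule ℂ L V] : Submodule ℂ (L ⊗[ℂ] (V ⊗[ℂ] V)) :=
  (maxTrivSubmodule ℂ L (L ⊗[ℂ] (V ⊗[ℂ] V)) : Submodule ℂ (L ⊗[ℂ] (V ⊗[ℂ] V))) ⊓
    LinearMap.ker (swapMap L V + LinearMap.id)


/-- `t ∈ 𝔥` represents the weight `χ` via the Killing form: `κ(t, ·) = χ` on `𝔥`.  Under
this identification, `⟨χ, ψ⟩ = ψ t` for weights `χ, ψ`. -/
def IsKillingDual (H : LieSubalgebra ℂ L) (χ : Module.Dual ℂ H) (t : H) : Prop :=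
  ∀ x : H, killingForm ℂ L (t : L) (x : L) = χ x

end AdjPaper

set_option linter.unusedSectionVars false

namespace AdjPaper

section basics

variable {L : Type} [LieRing L] [LieAlgebra ℂ L] [FiniteDimensional ℂ L] [LieAlgebra.IsKilling ℂ L]
  {H : LieSubalgebra ℂ L} [H.IsCartanSubalgebra]


/-- Membership in a root space is an honest eigenvector condition. -/
lemma mem_rs {χ : Dual ℂ H} {x : L} :
    x ∈ rootSpace H ⇑χ ↔ ∀ h : H, ⁅(h : L), x⁆ = χ h • x := by
  constructor
  · intro hx h
    exact IsKilling.lie_eq_smul_of_mem_rootSpace hx h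
  · intro hx
    apply weightSpace_le_genWeightSpace L (⇑χ)
    rw [mem_weightSpace]
    intro h
    exact hx h

lemma rs_lie {χ ψ : Dual ℂ H} {x y : L} (hx : x ∈ rootSpace H ⇑χ) (hy : y ∈ rootSpace H ⇑ψ) :
    ⁅x, y⁆ ∈ rootSpace H ⇑(χ + ψ) :=
  lie_mem_genWeightSpace_of_mem_genWeightSpace hx hy

lemma mem_rs_zero {x : L} : x ∈ rootSpace H ⇑(0 : Dual ℂ H) ↔ x ∈ H := by
  have := LieAlgebra.rootSpace_zero_eq ℂ L H
  rw [show (⇑(0 : Dual ℂ H)) = (0 : H → ℂ) from rfl, this, LieSubalgebra.mem_toLieSubmodule]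

lemma rs_cases {χ : Dual ℂ H} {x : L} (hx : x ∈ rootSpace H ⇑χ) (h0 : x ≠ 0) :
    χ = 0 ∨ IsRoot H χ := by
  by_cases h : χ = 0
  · exact Or.inl h
  · refine Or.inr ⟨h, fun hb => h0 ?_⟩
    rw [hb] at hx
    simpa using hx

/-- A basis of weight vectors. -/
lemma exists_basis (H : LieSubalgebra ℂ L) [H.IsCartanSubalgebra] :
    ∃ (ι : Type) (_ : Fintype ι) (b : Basis ι ℂ L) (χ : ι → Dual ℂ H),
      ∀ i, b i ∈ rootSpace H ⇑(χ i) := by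
  have h1 := LieModule.iSup_genWeightSpace_eq_top' ℂ H L
  have h2 := LieModule.iSupIndep_genWeightSpace' ℂ H L
  have hinternal : DirectSum.IsInternal
      (fun χ : Weight ℂ H L => (genWeightSpace L χ).toSubmodule) := by
    rw [DirectSum.isInternal_submodule_iff_iSupIndep_and_iSup_eq_top]
    refine ⟨?_, ?_⟩
    · exact LieSubmodule.iSupIndep_toSubmodule.mpr h2
    · exact LieSubmodule.iSup_toSubmodule_eq_top.mpr h1
  let v : ∀ χ : Weight ℂ H L, Basis (Fin (finrank ℂ (genWeightSpace L χ).toSubmodule)) ℂ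
      (genWeightSpace L χ).toSubmodule := fun χ => finBasis ℂ _
  let b := hinternal.collectedBasis v
  have : Fintype (Weight ℂ H L) := Fintype.ofFinite _
  let e := Fintype.equivFin (Weight ℂ H L)
  have hfin := Module.Finite.finite_basis b
  have : Fintype ((χ : Weight ℂ H L) × Fin (finrank ℂ (genWeightSpace L χ).toSubmodule)) :=
    Fintype.ofFinite _
  refine ⟨_, this, b, fun i => i.1.toLinear, fun i => ?_⟩
  exact hinternal.collectedBasis_mem v i

/-- Elements of Cartan commute with weight zero. -/
lemma cartan_lie (h h' : H) : ⁅(h : L), (h' : L)⁆ = 0 := by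
  have : (h' : L) ∈ rootSpace H ⇑(0 : Dual ℂ H) := mem_rs_zero.mpr h'.2
  simpa using mem_rs.mp this h

end basics

section hwmods

variable {L : Type} [LieRing L] [LieAlgebra ℂ L] [FiniteDimensional ℂ L] [LieAlgebra.IsKilling ℂ L]
  {H : LieSubalgebra ℂ L} [H.IsCartanSubalgebra] {r : ℕ} {α : Fin r → Dual ℂ H}

/-- weight vector condition -/
def IsW (H : LieSubalgebra ℂ L) {M : Type} [AddCommGroup M] [Module ℂ M] [LieRingModule L M]
    (κ : Dual ℂ H) (m : M) : Prop := ∀ h : H, ⁅(h : L), m⁆ = κ h • m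

/-- singular vector condition -/
def IsSing (H : LieSubalgebra ℂ L) [H.IsCartanSubalgebra] (α : Fin r → Dual ℂ H)
    {M : Type} [AddCommGroup M] [LieRingModule L M] (m : M) : Prop :=
  ∀ χ : Dual ℂ H, IsPosRoot H α χ → ∀ e ∈ rootSpace H ⇑χ, ⁅e, m⁆ = 0

/-- the map is compatible with positive root vectors for the base `α` -/
def wtc (α : Fin r → Dual ℂ H) (μ : Dual ℂ H) (c : Fin r → ℕ) : Dual ℂ H :=
  μ - ∑ j, (c j : ℂ) • α j

/-- triangular data -/
structure TD (H : LieSubalgebra ℂ L) [H.IsCartanSubalgebra] (α : Fin r → Dual ℂ H)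
    (hc : Fin r → H) (e f : Fin r → L) : Prop where
  base : IsBase H α
  e_mem : ∀ i, e i ∈ rootSpace H ⇑(α i)
  f_mem : ∀ i, f i ∈ rootSpace H ⇑(-α i)
  lie_ef : ∀ i, ⁅e i, f i⁆ = (hc i : L)
  two : ∀ i, α i (hc i) = 2

lemma isRoot_neg {χ : Dual ℂ H} (h : IsRoot H χ) : IsRoot H (-χ) := by
  refine ⟨by simpa using h.1, ?_⟩
  let w : Weight ℂ H L := ⟨⇑χ, h.2⟩
  exact (-w).genWeightSpace_ne_bot

lemma IsBase.neg (h : IsBase H α) : IsBase H (-α) where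
  isRoot j := isRoot_neg (h.isRoot j)
  indep := by
    have := h.indep
    rw [Fintype.linearIndependent_iff] at this ⊢
    intro g hg i
    apply this g _ i
    simpa using hg
  pos_neg χ hχ := by
    rcases h.pos_neg χ hχ with ⟨c, hc⟩ | ⟨c, hc⟩
    · exact Or.inr ⟨c, by simp [hc]⟩
    · exact Or.inl ⟨c, by simp [hc]⟩

lemma TD.neg {hc : Fin r → H} {e f : Fin r → L} (t : TD H α hc e f) :
    TD H (-α) (-hc) f e where
  base := t.base.neg
  e_mem i := t.f_mem i
  f_mem i := by simpa using t.e_mem i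
  lie_ef i := by rw [← lie_skew, t.lie_ef]; simp
  two i := by simpa using t.two i

lemma pos_or_neg (hb : IsBase H α) {χ : Dual ℂ H} (h : IsRoot H χ) :
    IsPosRoot H α χ ∨ IsPosRoot H (-α) χ := by
  rcases hb.pos_neg χ h with ⟨c, hc⟩ | ⟨c, hc⟩
  · exact Or.inl ⟨h, c, hc⟩
  · exact Or.inr ⟨h, c, by simp [hc]⟩

lemma isPosRoot_neg {χ : Dual ℂ H} : IsPosRoot H (-α) (-χ) ↔ IsPosRoot H α χ := by
  constructor
  · rintro ⟨h, c, hc⟩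
    exact ⟨by simpa using isRoot_neg h, c, by simpa using hc⟩
  · rintro ⟨h, c, hc⟩
    exact ⟨isRoot_neg h, c, by simp [hc]⟩

lemma L_ind (hb : IsBase H α) (S : Submodule ℂ L) (hH : ∀ h : H, (h : L) ∈ S)
    (hp : ∀ χ, IsPosRoot H α χ → ∀ x ∈ rootSpace H ⇑χ, x ∈ S)
    (hn : ∀ χ, IsPosRoot H (-α) χ → ∀ x ∈ rootSpace H ⇑χ, x ∈ S) (x : L) : x ∈ S := by
  obtain ⟨ι, _, b, χ, hb'⟩ := exists_basis H
  rw [← b.sum_repr x]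
  refine Submodule.sum_mem _ fun i _ => Submodule.smul_mem _ _ ?_
  rcases rs_cases (hb' i) (b.ne_zero i) with h | h
  · have := hb' i
    rw [h, mem_rs_zero] at this
    exact hH ⟨_, this⟩
  · rcases pos_or_neg hb h with h | h
    · exact hp _ h _ (hb' i)
    · exact hn _ h _ (hb' i)

variable {M : Type} [AddCommGroup M] [Module ℂ M] [LieRingModule L M] [LieModule ℂ L M]

/-- A subspace stable under negative root vectors containing a generating singular
vector is everything. -/
lemma lemmaC_gen (hb : IsBase H α) {μ : Dual ℂ H} {m : M} (hw : IsW H μ m) (hs : IsSing H α m)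
    (S : Submodule ℂ M) (hm : m ∈ S)
    (hS : ∀ χ, IsPosRoot H (-α) χ → ∀ x ∈ rootSpace H ⇑χ, ∀ s ∈ S, ⁅x, s⁆ ∈ S) :
    (LieSubmodule.lieSpan ℂ L {m} : LieSubmodule ℂ L M).toSubmodule ≤ S := by
  let F : Set (Submodule ℂ M) := {S | m ∈ S ∧
    ∀ χ, IsPosRoot H (-α) χ → ∀ x ∈ rootSpace H ⇑χ, ∀ s ∈ S, ⁅x, s⁆ ∈ S}
  let S0 : Submodule ℂ M := sInf F
  have h0m : m ∈ S0 := by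
    simp only [S0, Submodule.mem_sInf]
    exact fun p hp => hp.1
  have h0n : ∀ χ, IsPosRoot H (-α) χ → ∀ x ∈ rootSpace H ⇑χ, ∀ s ∈ S0, ⁅x, s⁆ ∈ S0 := by
    intro χ hχ x hx s hs
    simp only [S0, Submodule.mem_sInf] at hs ⊢
    exact fun p hp => hp.2 χ hχ x hx s (hs p hp)
  let T : Submodule ℂ M :=
    { carrier := {s | s ∈ S0 ∧ ∀ x : L, ⁅x, s⁆ ∈ S0}
      add_mem' := fun {a b} ha hb => ⟨S0.add_mem ha.1 hb.1, fun x => by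
        rw [lie_add]; exact S0.add_mem (ha.2 x) (hb.2 x)⟩
      zero_mem' := ⟨S0.zero_mem, fun x => by simp⟩
      smul_mem' := fun c a ha => ⟨S0.smul_mem c ha.1, fun x => by
        rw [lie_smul]; exact S0.smul_mem c (ha.2 x)⟩ }
  have hT : T ∈ F := by
    refine ⟨⟨h0m, fun x => ?_⟩, ?_⟩
    · let S1 : Submodule ℂ L :=
        { carrier := {x | ⁅x, m⁆ ∈ S0}
          add_mem' := fun {a b} ha hb => by
            simp only [Set.mem_ofPred_eq, add_lie] at *; exact S0.add_mem ha hb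
          zero_mem' := by simp
          smul_mem' := fun c a ha => by
            simp only [Set.mem_ofPred_eq, smul_lie] at *; exact S0.smul_mem c ha }
      refine L_ind hb S1 (fun h => ?_) (fun χ hχ x hx => ?_) (fun χ hχ x hx => ?_) x
      · change ⁅(h : L), m⁆ ∈ S0
        rw [hw h]; exact S0.smul_mem _ h0m
      · change ⁅x, m⁆ ∈ S0
        rw [hs χ hχ x hx]; exact S0.zero_mem
      · exact h0n χ hχ x hx m h0m
    · rintro χ hχ x hx s ⟨hs1, hs2⟩
      refine ⟨hs2 x, fun y => ?_⟩
      rw [leibniz_lie]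
      exact S0.add_mem (hs2 _) (h0n χ hχ x hx _ (hs2 y))
  have hle : S0 ≤ T := sInf_le hT
  let Q : LieSubmodule ℂ L M := { S0 with lie_mem := fun {x s} hs => (hle hs).2 x }
  have hQ : LieSubmodule.lieSpan ℂ L {m} ≤ Q := by
    rw [LieSubmodule.lieSpan_le]
    rw [Set.singleton_subset_iff]
    exact h0m
  have hS0 : S0 ≤ S := sInf_le ⟨hm, hS⟩
  exact fun x hx => hS0 (hQ hx)

lemma lemmaC (hb : IsBase H α) {μ : Dual ℂ H} {m : M} (hw : IsW H μ m) (hs : IsSing H α m)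
    (hg : LieSubmodule.lieSpan ℂ L {m} = (⊤ : LieSubmodule ℂ L M))
    (S : Submodule ℂ M) (hm : m ∈ S)
    (hS : ∀ χ, IsPosRoot H (-α) χ → ∀ x ∈ rootSpace H ⇑χ, ∀ s ∈ S, ⁅x, s⁆ ∈ S) (x : M) :
    x ∈ S := by
  apply lemmaC_gen hb hw hs S hm hS
  rw [hg]; trivial

lemma joint_eig {ι : Type} (w : ι → Dual ℂ H) (y : ι → M) (hy : ∀ c, IsW H (w c) (y c))
    (Q : Submodule ℂ M) (hQ : ∀ h : H, ∀ q ∈ Q, ⁅(h : L), q⁆ ∈ Q) :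
    ∀ (n : ℕ) (s : Finset ι) (a : ι → ℂ), s.card = n → ∀ x ∈ Q, x ≠ 0 →
      x = ∑ c ∈ s, a c • y c → ∃ c ∈ s, ∃ x' ∈ Q, x' ≠ 0 ∧ IsW H (w c) x' := by
  intro n
  induction n with
  | zero =>
    intro s a hs x _ h0 hx
    rw [Finset.card_eq_zero.mp hs] at hx
    simp [hx] at h0
  | succ n ih =>
    intro s a hs x hxQ h0 hx
    obtain ⟨c1, hc1⟩ : s.Nonempty := by
      rw [← Finset.card_pos]; omega
    by_cases hall : ∀ h : H, ⁅(h : L), x⁆ = w c1 h • x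
    · exact ⟨c1, hc1, x, hxQ, h0, hall⟩
    · push Not at hall
      obtain ⟨h, hh⟩ := hall
      have key := ih (s.erase c1) (fun c => a c * (w c h - w c1 h))
        (by rw [Finset.card_erase_of_mem hc1]; omega)
        (⁅(h : L), x⁆ - w c1 h • x) (Q.sub_mem (hQ h x hxQ) (Q.smul_mem _ hxQ))
        (sub_ne_zero.mpr hh) (by
          have e1 : ⁅(h : L), x⁆ - w c1 h • x
              = ∑ c ∈ s, (a c * (w c h - w c1 h)) • y c := by
            rw [hx, lie_sum, Finset.smul_sum, ← Finset.sum_sub_distrib]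
            refine Finset.sum_congr rfl fun c _ => ?_
            rw [lie_smul, hy c h, smul_smul, smul_smul, ← sub_smul]
            ring_nf
          rw [e1, ← Finset.add_sum_erase s _ hc1]
          simp)
      obtain ⟨c, hc, rest⟩ := key
      exact ⟨c, Finset.mem_of_mem_erase hc, rest⟩

lemma exists_weight_vec (Ω : Set (Dual ℂ H)) (Q : Submodule ℂ M)
    (hQ : ∀ h : H, ∀ q ∈ Q, ⁅(h : L), q⁆ ∈ Q) {x : M} (hxQ : x ∈ Q) (h0 : x ≠ 0)
    (hx : x ∈ Submodule.span ℂ {y : M | ∃ κ ∈ Ω, IsW H κ y}) :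
    ∃ κ ∈ Ω, ∃ x' ∈ Q, x' ≠ 0 ∧ IsW H κ x' := by
  rw [Submodule.mem_span_set'] at hx
  obtain ⟨n, a, g, hg⟩ := hx
  choose w hw1 hw2 using fun i => (g i).2
  obtain ⟨c, -, h⟩ := joint_eig w (fun i => (g i : M)) hw2 Q hQ _ Finset.univ a rfl x hxQ h0 hg.symm
  exact ⟨w c, hw1 c, h⟩

lemma weight_mem (Ω : Set (Dual ℂ H)) {x : M} {κ : Dual ℂ H} (h0 : x ≠ 0) (hκ : IsW H κ x)
    (hx : x ∈ Submodule.span ℂ {y : M | ∃ κ ∈ Ω, IsW H κ y}) : κ ∈ Ω := by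
  obtain ⟨κ', h1, x', h2, h3, h4⟩ := exists_weight_vec Ω (Submodule.span ℂ {x}) (by
    intro h q hq
    obtain ⟨a, rfl⟩ := Submodule.mem_span_singleton.mp hq
    rw [lie_smul, hκ h]
    exact Submodule.smul_mem _ _ (Submodule.smul_mem _ _ (Submodule.mem_span_singleton_self x)))
    (Submodule.mem_span_singleton_self x) h0 hx
  obtain ⟨a, rfl⟩ := Submodule.mem_span_singleton.mp h2
  have : κ' = κ := by
    ext h
    have e1 := h4 h
    rw [lie_smul, hκ h, smul_comm] at e1
    have := smul_left_injective ℂ h3 e1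
    exact this.symm
  rwa [← this]

lemma IsBase.inj (hb : IsBase H α) {c d : Fin r → ℕ}
    (h : ∑ j, (c j : ℂ) • α j = ∑ j, (d j : ℂ) • α j) : c = d := by
  have := Fintype.linearIndependent_iff.mp hb.indep (fun j => (c j : ℂ) - d j) (by
    simp only [sub_smul, Finset.sum_sub_distrib, h, sub_self])
  funext j
  have := this j
  rw [sub_eq_zero] at this
  exact_mod_cast this

lemma IsW.lie {κ χ : Dual ℂ H} {y : M} (hy : IsW H κ y) {x : L} (hx : x ∈ rootSpace H ⇑χ) :
    IsW H (κ + χ) ⁅x, y⁆ := by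
  intro h
  rw [leibniz_lie, mem_rs.mp hx h, hy h, smul_lie, lie_smul, ← add_smul, LinearMap.add_apply,
    add_comm]

/-- span of the weight spaces of strictly lower weight -/
def Sp (H : LieSubalgebra ℂ L) (α : Fin r → Dual ℂ H) (μ : Dual ℂ H) (M : Type) [AddCommGroup M]
    [Module ℂ M] [LieRingModule L M] : Submodule ℂ M :=
  Submodule.span ℂ {y : M | ∃ κ ∈ {κ | ∃ c : Fin r → ℕ, c ≠ 0 ∧ κ = wtc α μ c}, IsW H κ y}

lemma wtc_add_neg {μ χ : Dual ℂ H} (hχ : IsPosRoot H (-α) χ) (c : Fin r → ℕ) :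
    ∃ d : Fin r → ℕ, d ≠ 0 ∧ wtc α μ c + χ = wtc α μ (c + d) := by
  obtain ⟨hr, d, hd⟩ := hχ
  refine ⟨d, ?_, ?_⟩
  · rintro rfl
    exact hr.1 (by simp [hd])
  · simp [wtc, hd, add_smul, Finset.sum_add_distrib]
    abel

lemma Sp_stable {μ χ : Dual ℂ H} (hχ : IsPosRoot H (-α) χ) {x : L} (hx : x ∈ rootSpace H ⇑χ)
    {s : M} (hs : s ∈ Sp H α μ M) : ⁅x, s⁆ ∈ Sp H α μ M := by
  unfold Sp at hs ⊢
  induction hs using Submodule.span_induction with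
  | mem y hy =>
    obtain ⟨κ, ⟨c, hc0, rfl⟩, hy⟩ := hy
    apply Submodule.subset_span
    obtain ⟨d, hd0, hd⟩ := wtc_add_neg (μ := μ) hχ c
    refine ⟨_, ⟨c + d, ?_, rfl⟩, hd ▸ hy.lie hx⟩
    intro h
    exact hc0 (funext fun j => by have := congrFun h j; simp at this; simp [this.1])
  | zero => simp
  | add a b _ _ ha hb => rw [lie_add]; exact Submodule.add_mem _ ha hb
  | smul a b _ hb => rw [lie_smul]; exact Submodule.smul_mem _ _ hb

lemma lie_hw_mem_Sp {μ χ : Dual ℂ H} (hχ : IsPosRoot H (-α) χ) {x : L}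
    (hx : x ∈ rootSpace H ⇑χ) {m : M} (hw : IsW H μ m) : ⁅x, m⁆ ∈ Sp H α μ M := by
  obtain ⟨d, hd0, hd⟩ := wtc_add_neg (μ := μ) hχ 0
  refine Submodule.subset_span ⟨_, ⟨d, hd0, rfl⟩, ?_⟩
  have := hw.lie hx
  have e : wtc α μ 0 = μ := by simp [wtc]
  rw [zero_add, e] at hd
  rwa [← hd]

lemma hw_decomp (hb : IsBase H α) {μ : Dual ℂ H} {m : M} (hw : IsW H μ m) (hs : IsSing H α m)
    (hg : LieSubmodule.lieSpan ℂ L {m} = (⊤ : LieSubmodule ℂ L M)) (x : M) :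
    ∃ a : ℂ, x - a • m ∈ Sp H α μ M := by
  have := lemmaC hb hw hs hg (Submodule.span ℂ {m} ⊔ Sp H α μ M)
    (Submodule.mem_sup_left (Submodule.mem_span_singleton_self m)) (by
      intro χ hχ x hx s hs
      apply Submodule.mem_sup_right
      obtain ⟨a, ha, b, hb, rfl⟩ := Submodule.mem_sup.mp hs
      obtain ⟨a, rfl⟩ := Submodule.mem_span_singleton.mp ha
      rw [lie_add, lie_smul]
      exact Submodule.add_mem _ (Submodule.smul_mem _ _ (lie_hw_mem_Sp hχ hx hw))
        (Sp_stable hχ hx hb)) x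
  obtain ⟨a, ha, b, hb, rfl⟩ := Submodule.mem_sup.mp this
  obtain ⟨a, rfl⟩ := Submodule.mem_span_singleton.mp ha
  exact ⟨a, by simpa using hb⟩

lemma mem_Sp_weight (hb : IsBase H α) {μ : Dual ℂ H} {x : M} (hw : IsW H μ x)
    (hx : x ∈ Sp H α μ M) : x = 0 := by
  by_contra h0
  obtain ⟨c, hc0, hc⟩ := weight_mem _ h0 hw hx
  apply hc0
  apply hb.inj
  have : ∑ j, (c j : ℂ) • α j = 0 := by
    have h2 : μ - wtc α μ c = 0 := by rw [← hc, sub_self]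
    simpa [wtc] using h2
  simp [this]

lemma exists_eps (hb : IsBase H α) {μ : Dual ℂ H} {m : M} (hw : IsW H μ m) (hs : IsSing H α m)
    (hg : LieSubmodule.lieSpan ℂ L {m} = (⊤ : LieSubmodule ℂ L M)) (h0 : m ≠ 0) :
    ∃ ε : M →ₗ[ℂ] ℂ, ε m = 1 ∧ (∀ (h : H) x, ε ⁅(h : L), x⁆ = μ h * ε x) ∧
      ∀ χ, IsPosRoot H (-α) χ → ∀ x ∈ rootSpace H ⇑χ, ∀ y, ε ⁅x, y⁆ = 0 := by
  have hm : m ∉ Sp H α μ M := fun h => h0 (mem_Sp_weight hb hw h)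
  obtain ⟨ε, h1, h2⟩ := Submodule.exists_le_ker_of_notMem hm
  have hd := hw_decomp hb hw hs hg
  refine ⟨(ε m)⁻¹ • ε, by simp [h1], ?_, ?_⟩
  · intro h x
    obtain ⟨a, ha⟩ := hd x
    have hS : ∀ s ∈ Sp H α μ M, ⁅(h : L), s⁆ ∈ Sp H α μ M := by
      intro s hs
      unfold Sp at hs ⊢
      induction hs using Submodule.span_induction with
      | mem y hy =>
        obtain ⟨κ, hκ, hy⟩ := hy
        rw [hy h]
        exact Submodule.smul_mem _ _ (Submodule.subset_span ⟨κ, hκ, hy⟩)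
      | zero => simp
      | add a b _ _ ha hb => rw [lie_add]; exact Submodule.add_mem _ ha hb
      | smul a b _ hb => rw [lie_smul]; exact Submodule.smul_mem _ _ hb
    have e1 := h2 (hS _ ha)
    have e2 := h2 ha
    simp only [LinearMap.mem_ker, lie_sub, lie_smul, map_sub, map_smul, hw h, smul_eq_mul] at e1 e2
    simp only [LinearMap.smul_apply, smul_eq_mul]
    rw [sub_eq_zero] at e1 e2
    rw [e1, e2]; ring
  · intro χ hχ x hx y
    obtain ⟨a, ha⟩ := hd y
    have e1 := h2 (Sp_stable hχ hx ha)
    have e2 := h2 (lie_hw_mem_Sp hχ hx hw)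
    simp only [LinearMap.mem_ker, lie_sub, lie_smul, map_sub, map_smul, smul_eq_mul] at e1 e2
    simp only [LinearMap.smul_apply, smul_eq_mul]
    rw [e2] at e1
    simp only [mul_zero, sub_zero] at e1
    rw [e1, mul_zero]

lemma exists_mem_ne_zero {Q : LieSubmodule ℂ L M} (hQ : Q ≠ ⊥) : ∃ x ∈ Q, x ≠ 0 := by
  by_contra h
  push Not at h
  exact hQ ((LieSubmodule.eq_bot_iff Q).mpr h)

/-- every nonzero submodule of a highest weight module contains a singular weight vector -/
lemma exists_sing (hb : IsBase H α) {μ : Dual ℂ H} {m : M} (hw : IsW H μ m) (hs : IsSing H α m)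
    (hg : LieSubmodule.lieSpan ℂ L {m} = (⊤ : LieSubmodule ℂ L M)) (Q : LieSubmodule ℂ L M)
    (hQ : Q ≠ ⊥) : ∃ c : Fin r → ℕ, ∃ x ∈ Q, x ≠ 0 ∧ IsW H (wtc α μ c) x ∧ IsSing H α x := by
  have hspan : ∀ x : M, x ∈ Submodule.span ℂ
      {y : M | ∃ κ ∈ Set.range (wtc α μ), IsW H κ y} := by
    intro x
    obtain ⟨a, ha⟩ := hw_decomp hb hw hs hg x
    rw [show x = (x - a • m) + a • m by abel]
    refine Submodule.add_mem _ (Submodule.span_mono ?_ ha) (Submodule.smul_mem _ _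
      (Submodule.subset_span ⟨μ, ⟨0, by simp [wtc]⟩, hw⟩))
    rintro y ⟨κ, ⟨c, -, rfl⟩, hy⟩
    exact ⟨_, ⟨c, rfl⟩, hy⟩
  obtain ⟨x, hxQ, hx0⟩ := exists_mem_ne_zero hQ
  have hex : ∃ n : ℕ, ∃ c : Fin r → ℕ, ∑ j, c j = n ∧ ∃ x ∈ Q, x ≠ 0 ∧ IsW H (wtc α μ c) x := by
    obtain ⟨κ, ⟨c, rfl⟩, x', h⟩ := exists_weight_vec _ Q.toSubmodule
      (fun h q hq => Q.lie_mem hq) hxQ hx0 (hspan x)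
    exact ⟨_, c, rfl, x', h⟩
  obtain ⟨c, hc, x, hxQ, hx0, hxw⟩ := Nat.find_spec hex
  refine ⟨c, x, hxQ, hx0, hxw, ?_⟩
  rintro χ ⟨hr, d, hd⟩ e he
  by_contra hne
  have hw' := hxw.lie he
  obtain ⟨c', hc'⟩ := weight_mem _ hne hw' (hspan _)
  have hcc : c' + d = c := by
    apply hb.inj
    have : wtc α μ c' + 0 = wtc α μ c + χ := by rw [add_zero]; exact hc'
    simp only [Pi.add_apply, Nat.cast_add, add_smul, Finset.sum_add_distrib]
    rw [← hd]
    simp only [wtc] at hc'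
    have h3 := congrArg (fun z => μ - z + χ) hc'
    rw [show μ - (μ - ∑ j, (c' j : ℂ) • α j) + χ = ∑ j, (c' j : ℂ) • α j + χ by abel] at h3
    rw [h3]; abel
  have hd0 : d ≠ 0 := by
    rintro rfl
    exact hr.1 (by simp [hd])
  have hlt : ∑ j, c' j < Nat.find hex := by
    rw [← hc, ← hcc]
    simp only [Pi.add_apply, Finset.sum_add_distrib]
    have : 0 < ∑ j, d j := by
      rw [Nat.pos_iff_ne_zero]
      intro h
      apply hd0
      funext j
      simpa using (Finset.sum_eq_zero_iff.mp h) j (Finset.mem_univ j)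
    omega
  refine Nat.find_min hex hlt ⟨c', rfl, ⁅e, x⁆, Q.lie_mem hxQ, hne, ?_⟩
  rw [hc']; exact hw'

end hwmods

section rootfacts

variable {L : Type} [LieRing L] [LieAlgebra ℂ L] [FiniteDimensional ℂ L] [LieAlgebra.IsKilling ℂ L]
  {H : LieSubalgebra ℂ L} [H.IsCartanSubalgebra] {r : ℕ} {α : Fin r → Dual ℂ H}
  {hc : Fin r → H} {e f : Fin r → L}

/-- a root as a Mathlib weight -/
def IsRoot.wt {χ : Dual ℂ H} (h : IsRoot H χ) : Weight ℂ H L := ⟨⇑χ, h.2⟩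

lemma IsRoot.wt_coe {χ : Dual ℂ H} (h : IsRoot H χ) : (⇑h.wt : H → ℂ) = ⇑χ := rfl

lemma IsRoot.wt_lin {χ : Dual ℂ H} (h : IsRoot H χ) : h.wt.toLinear = χ := by
  ext x; rfl

lemma IsRoot.wt_nz {χ : Dual ℂ H} (h : IsRoot H χ) : h.wt.IsNonZero := by
  intro h0
  apply h.1
  ext x
  exact congrFun h0 x

lemma weight_isRoot {w : Weight ℂ H L} (h : w.IsNonZero) : IsRoot H w.toLinear := by
  refine ⟨fun h0 => h ?_, w.genWeightSpace_ne_bot⟩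
  funext x
  exact LinearMap.congr_fun h0 x

lemma not_isRoot_two {χ : Dual ℂ H} (h : IsRoot H χ) (h2 : IsRoot H (χ + χ)) : False := by
  rcases IsKilling.eq_neg_one_or_eq_zero_or_eq_one_of_eq_smul h.wt h2.wt h.wt_nz (2 : ℂ)
    (by rw [h2.wt_coe, h.wt_coe]; funext x; simp [two_mul]) with h | h | h
  · have := congrArg Complex.re h
    norm_num at this
  · norm_num at h
  · norm_num at h

lemma rs_one_dim {χ : Dual ℂ H} (h : IsRoot H χ) {x y : L} (hx : x ∈ rootSpace H ⇑χ)
    (hy : y ∈ rootSpace H ⇑χ) (hx0 : x ≠ 0) : ∃ a : ℂ, y = a • x := by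
  have h1 := IsKilling.finrank_rootSpace_eq_one h.wt h.wt_nz
  have := (finrank_eq_one_iff_of_nonzero' (K := ℂ) (V := rootSpace H ⇑χ) ⟨x, hx⟩
    (by simpa using hx0)).mp h1 ⟨y, hy⟩
  obtain ⟨a, ha⟩ := this
  exact ⟨a, by simpa using (congrArg Subtype.val ha).symm⟩

lemma TD.isSl2 (t : TD H α hc e f) (i : Fin r) : IsSl2Triple (hc i : L) (e i) (f i) where
  h_ne_zero := by
    intro h
    have h1 := t.two i
    have : hc i = 0 := Subtype.ext h
    rw [this] at h1
    simp at h1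
  lie_e_f := t.lie_ef i
  lie_h_e_nsmul := by
    rw [mem_rs.mp (t.e_mem i), t.two i, two_smul, two_nsmul]
  lie_h_f_nsmul := by
    rw [mem_rs.mp (t.f_mem i), LinearMap.neg_apply, t.two i, neg_smul, two_smul, two_nsmul]

lemma TD.hc_eq (t : TD H α hc e f) (i : Fin r) : hc i = IsKilling.coroot (t.base.isRoot i).wt := by
  have := (t.isSl2 i).h_eq_coroot (t.base.isRoot i).wt_nz (t.e_mem i) (t.f_mem i)
  exact Subtype.ext this

lemma TD.int (t : TD H α hc e f) (i : Fin r) (w : Weight ℂ H L) : ∃ n : ℤ, w (hc i) = n := by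
  rw [t.hc_eq i]
  exact ⟨_, IsKilling.apply_coroot_eq_cast _ _⟩

lemma pos_sub (t : TD H α hc e f) (j : Fin r) {δ : Dual ℂ H} (hδ : IsPosRoot H α δ)
    (hr : IsRoot H (δ - α j)) : IsPosRoot H α (δ - α j) := by
  refine ⟨hr, ?_⟩
  obtain ⟨hr', c, hc⟩ := hδ
  rcases t.base.pos_neg _ hr with ⟨d, hd⟩ | ⟨d, hd⟩
  · exact ⟨d, hd⟩
  · exfalso
    have hs : α j = ∑ k, ((Pi.single j 1 : Fin r → ℕ) k : ℂ) • α k := by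
      rw [Finset.sum_eq_single j] <;> simp +contextual
    have h2 : c + d = Pi.single j 1 := by
      apply t.base.inj
      rw [← hs]
      simp only [Pi.add_apply, Nat.cast_add, add_smul, Finset.sum_add_distrib]
      rw [← hc, eq_comm, ← sub_eq_iff_eq_add]
      rw [← neg_eq_iff_eq_neg] at hd
      rw [← hd]; abel
    have hc0 : c = 0 ∨ d = 0 := by
      by_cases hcj : c j = 0
      · left
        funext k
        by_cases hk : k = j
        · rw [hk, hcj]; rfl
        · have := congrFun h2 k
          simp [hk] at this
          simp [this.1]
      · right
        funext k
        have := congrFun h2 k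
        by_cases hk : k = j
        · subst hk
          simp at this
          simp; omega
        · simp [hk] at this
          simp [this.2]
    rcases hc0 with rfl | rfl
    · exact hr'.1 (by simp [hc])
    · exact hr.1 (by simp [hd])

lemma pos_add (t : TD H α hc e f) (j : Fin r) {δ : Dual ℂ H} (hδ : IsPosRoot H α δ) :
    δ + α j ≠ 0 ∧ (IsRoot H (δ + α j) → IsPosRoot H α (δ + α j)) := by
  obtain ⟨hr', c, hc⟩ := hδ
  have hs : α j = ∑ k, ((Pi.single j 1 : Fin r → ℕ) k : ℂ) • α k := by
    rw [Finset.sum_eq_single j] <;> simp +contextual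
  have e1 : δ + α j = ∑ k, ((c + Pi.single j 1 : Fin r → ℕ) k : ℂ) • α k := by
    simp only [Pi.add_apply, Nat.cast_add, add_smul, Finset.sum_add_distrib]
    rw [← hc, ← hs]
  refine ⟨fun h => ?_, fun hr => ⟨hr, _, e1⟩⟩
  rw [e1] at h
  have := t.base.inj (c := c + Pi.single j 1) (d := 0) (by rw [h]; simp)
  have := congrFun this j
  simp at this

/-- Killing dual -/
noncomputable def tK (χ : Dual ℂ H) : H := (IsKilling.cartanEquivDual H).symm χ

lemma tK_apply (χ : Dual ℂ H) (h : H) : killingForm ℂ L (tK χ : L) (h : L) = χ h := by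
  have : IsKilling.cartanEquivDual H (tK χ) h = χ h := by
    simp [tK]
  rw [← this]; rfl

lemma tK_symm (χ ψ : Dual ℂ H) : χ (tK ψ) = ψ (tK χ) := by
  rw [← tK_apply, ← tK_apply, LieModule.traceForm_comm]

lemma tK_add (χ ψ : Dual ℂ H) : tK (χ + ψ) = tK χ + tK ψ := map_add _ _ _
lemma tK_smul (a : ℂ) (χ : Dual ℂ H) : tK (a • χ) = a • tK χ := map_smul _ _ _
lemma tK_sum {ι : Type} (s : Finset ι) (χ : ι → Dual ℂ H) :
    tK (∑ i ∈ s, χ i) = ∑ i ∈ s, tK (χ i) := map_sum _ _ _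

lemma lie_rs_neg {χ : Dual ℂ H} (h : IsRoot H χ) {x y : L} (hx : x ∈ rootSpace H ⇑χ)
    (hy : y ∈ rootSpace H ⇑(-χ)) : ⁅x, y⁆ = killingForm ℂ L x y • (tK χ : L) := by
  have := IsKilling.lie_eq_killingForm_smul_of_mem_rootSpace_of_mem_rootSpace_neg
    (α := h.wt) hx hy
  rw [this, h.wt_lin]; rfl

lemma tK_simple (t : TD H α hc e f) (j : Fin r) : ∃ p : ℝ, 0 < p ∧ tK (α j) = (p : ℂ) • hc j := by
  have h1 : (hc j : L) = killingForm ℂ L (e j) (f j) • (tK (α j) : L) := by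
    rw [← t.lie_ef]; exact lie_rs_neg (t.base.isRoot j) (t.e_mem j) (t.f_mem j)
  have h1' : hc j = killingForm ℂ L (e j) (f j) • tK (α j) := Subtype.ext (by simpa using h1)
  set k := killingForm ℂ L (e j) (f j) with hk
  have h2 : killingForm ℂ L (hc j : L) (hc j : L) = 2 * k := by
    have h0 : killingForm ℂ L (tK (α j) : L) (hc j : L) = 2 := by rw [tK_apply, t.two]
    calc killingForm ℂ L (hc j : L) (hc j : L)
        = killingForm ℂ L (k • (tK (α j) : L)) (hc j : L) := by rw [← h1]
      _ = 2 * k := by rw [map_smul, LinearMap.smul_apply, h0, smul_eq_mul, mul_comm]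
  have h3 : killingForm ℂ L (hc j : L) (hc j : L) = ∑ w ∈ H.root, w (hc j) * w (hc j) := by
    have := LinearMap.congr_fun (LinearMap.congr_fun
      (IsKilling.restrict_killingForm_eq_sum (K := ℂ) (L := L) (H := H)) (hc j)) (hc j)
    simp only [LinearMap.sum_apply, LinearMap.smulRight_apply, LinearMap.smul_apply,
      smul_eq_mul, Weight.toLinear_apply] at this
    exact this
  choose n hn using t.int j
  have h4 : (2 : ℂ) * k = ((∑ w ∈ H.root, n w * n w : ℤ) : ℂ) := by
    rw [← h2, h3]; push_cast
    exact Finset.sum_congr rfl fun w _ => by rw [hn]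
  have hpos : 0 < ∑ w ∈ H.root, n w * n w := by
    apply Finset.sum_pos'
    · intro i _; exact mul_self_nonneg _
    · refine ⟨(t.base.isRoot j).wt, ?_, ?_⟩
      · simpa [LieSubalgebra.root] using (t.base.isRoot j).wt_nz
      · have := hn (t.base.isRoot j).wt
        have h5 : (t.base.isRoot j).wt (hc j) = 2 := t.two j
        rw [h5] at this
        have h6 : n (t.base.isRoot j).wt = 2 := by exact_mod_cast this.symm
        rw [h6]; norm_num
  set N := ∑ w ∈ H.root, n w * n w
  refine ⟨((N : ℝ) / 2)⁻¹, by positivity, ?_⟩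
  have hkN : k = (N : ℂ) / 2 := by rw [← h4]; ring
  have hk0 : k ≠ 0 := by
    rw [hkN]
    have : (N : ℂ) ≠ 0 := by exact_mod_cast hpos.ne'
    simpa using this
  rw [h1', smul_smul]
  push_cast
  rw [← hkN, inv_mul_cancel₀ hk0, one_smul]

end rootfacts

section casimir

variable {L : Type} [LieRing L] [LieAlgebra ℂ L] [FiniteDimensional ℂ L] [LieAlgebra.IsKilling ℂ L]
  {H : LieSubalgebra ℂ L} [H.IsCartanSubalgebra] {r : ℕ} {α : Fin r → Dual ℂ H}
  {hc : Fin r → H} {e f : Fin r → L}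
  {ι : Type} [Fintype ι] (b : Basis ι ℂ L) {χ : ι → Dual ℂ H}
  {M : Type} [AddCommGroup M] [Module ℂ M] [LieRingModule L M] [LieModule ℂ L M]

/-- dual basis for the Killing form -/
noncomputable def kd : Basis ι ℂ L :=
  LinearMap.BilinForm.dualBasis (killingForm ℂ L) (IsKilling.killingForm_nondegenerate ℂ L) b

lemma kd_repr (x : L) (i : ι) : (kd b).repr x i = killingForm ℂ L x (b i) :=
  LinearMap.BilinForm.dualBasis_repr_apply _ b x i

lemma kd_right (i j : ι) : killingForm ℂ L (b i) (kd b j) = if i = j then 1 else 0 := by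
  rw [LieModule.traceForm_comm, ← kd_repr, Basis.repr_self, Finsupp.single_apply]
  simp [eq_comm]

lemma b_repr (x : L) (i : ι) : b.repr x i = killingForm ℂ L x (kd b i) := by
  conv_rhs => rw [← b.sum_repr x]
  rw [map_sum, LinearMap.sum_apply]
  simp [kd_right]

lemma kd_mem (hb : ∀ i, b i ∈ rootSpace H ⇑(χ i)) (i : ι) :
    kd b i ∈ rootSpace H ⇑(-χ i) := by
  rw [mem_rs]
  intro h
  apply (kd b).repr.injective
  ext j
  rw [kd_repr, LieModule.traceForm_apply_lie_apply', mem_rs.mp (hb j) h]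
  simp only [map_smul, smul_eq_mul, LinearMap.neg_apply, Finsupp.smul_apply, Basis.repr_self,
    Finsupp.single_apply]
  rw [LieModule.traceForm_comm]
  have := kd_right b j i
  rw [killingForm] at this
  rw [this]
  by_cases hij : i = j
  · subst hij; simp
  · simp [hij, Ne.symm hij]

/-- The Casimir operator. -/
noncomputable def cas (M : Type) [AddCommGroup M] [Module ℂ M] [LieRingModule L M] [LieModule ℂ L M] :
    M →ₗ[ℂ] M := ∑ i, (toEnd ℂ L M (b i)) ∘ₗ (toEnd ℂ L M (kd b i))

lemma cas_apply (m : M) : cas b M m = ∑ i, ⁅b i, ⁅kd b i, m⁆⁆ := by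
  simp [cas]

lemma cas_comm (x : L) (m : M) : cas b M ⁅x, m⁆ = ⁅x, cas b M m⁆ := by
  rw [cas_apply, cas_apply, lie_sum]
  have key : ∀ i, ⁅x, ⁅b i, ⁅kd b i, m⁆⁆⁆ = ⁅b i, ⁅kd b i, ⁅x, m⁆⁆⁆ +
      (⁅⁅x, b i⁆, ⁅kd b i, m⁆⁆ + ⁅b i, ⁅⁅x, kd b i⁆, m⁆⁆) := by
    intro i
    rw [leibniz_lie x (b i), leibniz_lie x (kd b i), lie_add]
    abel
  rw [Finset.sum_congr rfl fun i _ => key i, Finset.sum_add_distrib, eq_comm, add_eq_left,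
    Finset.sum_add_distrib]
  have e1 : ∀ i, ⁅⁅x, b i⁆, ⁅kd b i, m⁆⁆ =
      ∑ j, killingForm ℂ L ⁅x, b i⁆ (kd b j) • ⁅b j, ⁅kd b i, m⁆⁆ := by
    intro i
    conv_lhs => rw [← b.sum_repr ⁅x, b i⁆]
    simp only [b_repr, sum_lie, smul_lie]
  have e2 : ∀ i, ⁅b i, ⁅⁅x, kd b i⁆, m⁆⁆ =
      ∑ j, killingForm ℂ L ⁅x, kd b i⁆ (b j) • ⁅b i, ⁅kd b j, m⁆⁆ := by
    intro i
    conv_lhs => rw [← (kd b).sum_repr ⁅x, kd b i⁆]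
    simp only [kd_repr, sum_lie, smul_lie, lie_sum, lie_smul]
  simp only [e1, e2]
  rw [Finset.sum_comm (f := fun i j => killingForm ℂ L ⁅x, b i⁆ (kd b j) • ⁅b j, ⁅kd b i, m⁆⁆),
    ← Finset.sum_add_distrib]
  refine Finset.sum_eq_zero fun i _ => ?_
  rw [← Finset.sum_add_distrib]
  refine Finset.sum_eq_zero fun j _ => ?_
  rw [← add_smul, LieModule.traceForm_apply_lie_apply' ℂ L L x (b j), LieModule.traceForm_comm ℂ L L (b j),
    killingForm, neg_add_cancel, zero_smul]

lemma lie_lie_of_sing {κ ψ : Dual ℂ H} {m : M} (hw : IsW H κ m) (hs : IsSing H α m)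
    (hψ : IsPosRoot H α ψ) {x y : L} (hx : x ∈ rootSpace H ⇑ψ) (hy : y ∈ rootSpace H ⇑(-ψ))
    (hxy : killingForm ℂ L x y = 1) : ⁅x, ⁅y, m⁆⁆ = κ (tK ψ) • m := by
  rw [leibniz_lie, hs ψ hψ x hx, lie_zero, add_zero, lie_rs_neg hψ.1 hx hy, hxy, one_smul, hw]

lemma cas_sing (hbase : IsBase H α) (hb : ∀ i, b i ∈ rootSpace H ⇑(χ i)) {κ : Dual ℂ H} {m : M}
    (hw : IsW H κ m) (hs : IsSing H α m) :
    cas b M m = (κ (tK κ) + ∑ i, if IsPosRoot H α (χ i) then χ i (tK κ) else 0) • m := by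
  rw [cas_apply]
  have key : ∀ i, ⁅b i, ⁅kd b i, m⁆⁆ =
      (killingForm ℂ L (tK κ : L) (b i) * killingForm ℂ L (tK κ : L) (kd b i) +
        if IsPosRoot H α (χ i) then χ i (tK κ) else 0) • m := by
    intro i
    have ht : (tK κ : L) ∈ rootSpace H ⇑(0 : Dual ℂ H) := mem_rs_zero.mpr (tK κ).2
    rcases rs_cases (hb i) (b.ne_zero i) with h0 | hr
    · have h1 := hb i
      have h2 := kd_mem b hb i
      rw [h0] at h1 h2
      rw [neg_zero] at h2
      rw [mem_rs_zero] at h1 h2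
      have hnp : ¬ IsPosRoot H α (χ i) := fun h => h.1.1 h0
      rw [if_neg hnp, add_zero]
      have e1 := tK_apply κ ⟨b i, h1⟩
      have e2 := tK_apply κ ⟨kd b i, h2⟩
      simp only at e1 e2
      have e3 := hw ⟨kd b i, h2⟩
      have e4 := hw ⟨b i, h1⟩
      simp only at e3 e4
      rw [e1, e2, mul_smul, e3, lie_smul, e4, smul_comm]
    · have hz : killingForm ℂ L (tK κ : L) (b i) = 0 := by
        apply killingForm_apply_eq_zero_of_mem_rootSpace_of_add_ne_zero ℂ L H ht (hb i)
        intro h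
        apply hr.1
        ext x
        simpa using congrFun h x
      rw [hz, zero_mul, zero_add]
      rcases pos_or_neg hbase hr with hp | hn
      · rw [if_pos hp, lie_lie_of_sing hw hs hp (hb i) (kd_mem b hb i) (by simp [kd_right]),
          tK_symm]
      · have hp' : IsPosRoot H α (-χ i) := by
          rw [← isPosRoot_neg]; simpa using hn
        have hnp : ¬ IsPosRoot H α (χ i) := by
          rintro ⟨-, c, hc⟩
          obtain ⟨-, d, hd⟩ := hp'
          have := hbase.inj (c := c + d) (d := 0) (by
            simp only [Pi.add_apply, Nat.cast_add, add_smul, Finset.sum_add_distrib]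
            rw [← hc, ← hd]; simp)
          have hc0 : c = 0 := by
            funext k
            have := congrFun this k
            simp at this
            simp [this.1]
          exact hr.1 (by simp [hc, hc0])
        rw [if_neg hnp, zero_smul, hs _ hp' _ (kd_mem b hb i), lie_zero]
  rw [Finset.sum_congr rfl fun i _ => key i, ← Finset.sum_smul, Finset.sum_add_distrib]
  congr 2
  rw [← tK_apply]
  conv_rhs => rw [← b.sum_repr (tK κ : L)]
  conv_rhs => enter [2, 2, i]; rw [b_repr]
  conv_rhs => enter [1]; rw [b.sum_repr]
  rw [map_sum]
  refine Finset.sum_congr rfl fun i _ => ?_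
  rw [map_smul, smul_eq_mul, mul_comm]

end casimir

section irr

variable {L : Type} [LieRing L] [LieAlgebra ℂ L] [FiniteDimensional ℂ L] [LieAlgebra.IsKilling ℂ L]
  {H : LieSubalgebra ℂ L} [H.IsCartanSubalgebra] {r : ℕ} {α : Fin r → Dual ℂ H}
  {hc : Fin r → H} {e f : Fin r → L}
  {ι : Type} [Fintype ι] (b : Basis ι ℂ L) {χ : ι → Dual ℂ H}
  {M : Type} [AddCommGroup M] [Module ℂ M] [LieRingModule L M] [LieModule ℂ L M]

lemma repr_wt (hb : ∀ i, b i ∈ rootSpace H ⇑(χ i)) {ψ : Dual ℂ H} {x : L}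
    (hx : x ∈ rootSpace H ⇑ψ) {q : ι} (hq : b.repr x q ≠ 0) : χ q = ψ := by
  ext h
  have h1 : b.repr ⁅(h : L), x⁆ q = ψ h * b.repr x q := by
    rw [mem_rs.mp hx h]; simp
  have h2 : b.repr ⁅(h : L), x⁆ q = χ q h * b.repr x q := by
    conv_lhs => rw [← b.sum_repr x]
    have : ∀ i, ⁅(h : L), b.repr x i • b i⁆ = (b.repr x i * χ i h) • b i := by
      intro i
      rw [lie_smul, mem_rs.mp (hb i) h, smul_smul]
    rw [lie_sum, Finset.sum_congr rfl fun i _ => this i, b.repr_sum_self, mul_comm]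
  rw [h1] at h2
  exact (mul_right_cancel₀ hq h2).symm

lemma rho_simple (t : TD H α hc e f) (hb : ∀ i, b i ∈ rootSpace H ⇑(χ i)) (j : Fin r) :
    ∃ n : ℕ, 0 < n ∧ (∑ i, if IsPosRoot H α (χ i) then χ i (hc j) else 0) = (n : ℂ) := by
  let E : ι → ι → ℂ := fun p q => b.repr ⁅e j, b q⁆ p
  let F : ι → ι → ℂ := fun p q => b.repr ⁅f j, b q⁆ p
  let P : Finset ι := Finset.univ.filter fun i => IsPosRoot H α (χ i) ∧ χ i ≠ α j
  let Q : Finset ι := Finset.univ.filter fun i => χ i = α j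
  have hnz : ∀ i, χ i = 0 ∨ IsRoot H (χ i) := fun i => rs_cases (hb i) (b.ne_zero i)
  have hE : ∀ p ∈ P, ∀ q, E q p ≠ 0 → q ∈ P := by
    intro p hp q hq
    simp only [P, Finset.mem_filter, Finset.mem_univ, true_and] at hp ⊢
    have h1 := repr_wt b hb (rs_lie (t.e_mem j) (hb p)) hq
    rw [add_comm] at h1
    obtain ⟨h2, h3⟩ := pos_add t j hp.1
    rw [← h1] at h2 h3
    refine ⟨h3 ((hnz q).resolve_left h2), fun h => hp.1.1.1 ?_⟩
    rw [h] at h1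
    exact (left_eq_add.mp (h1.trans (add_comm _ _)))
  have hF : ∀ p ∈ P, ∀ q, F q p ≠ 0 → q ∈ P := by
    intro p hp q hq
    simp only [P, Finset.mem_filter, Finset.mem_univ, true_and] at hp ⊢
    have h1 := repr_wt b hb (rs_lie (t.f_mem j) (hb p)) hq
    rw [neg_add_eq_sub] at h1
    have hr : IsRoot H (χ q) := by
      refine (hnz q).resolve_left fun h => hp.2 ?_
      rw [h1, sub_eq_zero] at h
      exact h
    refine ⟨?_, fun h => ?_⟩
    · rw [h1] at hr ⊢
      exact pos_sub t j hp.1 hr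
    · rw [h, eq_comm, sub_eq_iff_eq_add] at h1
      have := hp.1.1
      rw [h1] at this
      exact not_isRoot_two (t.base.isRoot j) this
  have mulE : ∀ (x : L) p, b.repr ⁅e j, x⁆ p = ∑ q, E p q * b.repr x q := by
    intro x p
    conv_lhs => rw [← b.sum_repr x]
    rw [lie_sum, map_sum, Finset.sum_apply']
    refine Finset.sum_congr rfl fun q _ => ?_
    rw [lie_smul, map_smul, Finsupp.smul_apply, smul_eq_mul, mul_comm]
  have mulF : ∀ (x : L) p, b.repr ⁅f j, x⁆ p = ∑ q, F p q * b.repr x q := by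
    intro x p
    conv_lhs => rw [← b.sum_repr x]
    rw [lie_sum, map_sum, Finset.sum_apply']
    refine Finset.sum_congr rfl fun q _ => ?_
    rw [lie_smul, map_smul, Finsupp.smul_apply, smul_eq_mul, mul_comm]
  have diag : ∀ p, χ p (hc j) = ∑ q, (E p q * F q p - F p q * E q p) := by
    intro p
    have h1 : b.repr ⁅(hc j : L), b p⁆ p = χ p (hc j) := by
      rw [mem_rs.mp (hb p)]; simp
    rw [← h1, ← t.lie_ef, lie_lie, map_sub, Finsupp.sub_apply, mulE, mulF,
      Finset.sum_sub_distrib]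
  have hP : ∑ p ∈ P, χ p (hc j) = 0 := by
    have h1 : ∀ p ∈ P, χ p (hc j) = ∑ q ∈ P, (E p q * F q p - F p q * E q p) := by
      intro p hp
      rw [diag, eq_comm]
      apply Finset.sum_subset (Finset.subset_univ _)
      intro q _ hq
      have e1 : F q p = 0 := by_contra fun h => hq (hF p hp q h)
      have e2 : E q p = 0 := by_contra fun h => hq (hE p hp q h)
      rw [e1, e2]; simp
    rw [Finset.sum_congr rfl h1]
    simp only [Finset.sum_sub_distrib]
    rw [Finset.sum_comm (f := fun p q => F p q * E q p), sub_eq_zero]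
    refine Finset.sum_congr rfl fun p _ => Finset.sum_congr rfl fun q _ => mul_comm _ _
  have hpα : IsPosRoot H α (α j) := by
    refine ⟨t.base.isRoot j, Pi.single j 1, ?_⟩
    rw [Finset.sum_eq_single j] <;> simp +contextual
  refine ⟨2 * Q.card, ?_, ?_⟩
  · have : Q.Nonempty := by
      have he := (t.isSl2 j).e_ne_zero
      by_contra hne
      apply he
      apply b.repr.injective
      ext q
      by_contra hq
      apply hne
      exact ⟨q, by simpa [Q] using repr_wt b hb (t.e_mem j) (by simpa using hq)⟩
    have := this.card_pos
    omega
  · have split : ∀ i, (if IsPosRoot H α (χ i) then χ i (hc j) else 0) =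
        (if IsPosRoot H α (χ i) ∧ χ i ≠ α j then χ i (hc j) else 0) +
        (if χ i = α j then 2 else 0) := by
      intro i
      by_cases h : χ i = α j
      · rw [h]; simp [hpα, t.two]
      · simp [h]
    rw [Finset.sum_congr rfl fun i _ => split i, Finset.sum_add_distrib, ← Finset.sum_filter,
      ← Finset.sum_filter]
    change ∑ p ∈ P, χ p (hc j) + ∑ p ∈ Q, 2 = _
    rw [hP]
    simp [mul_comm]

lemma casimir_eq (t : TD H α hc e f) {μ : Dual ℂ H} {m x : M} (hw : IsW H μ m)
    (hs : IsSing H α m) (hg : LieSubmodule.lieSpan ℂ L {m} = (⊤ : LieSubmodule ℂ L M))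
    {c : Fin r → ℕ} (hx0 : x ≠ 0) (hxw : IsW H (wtc α μ c) x) (hxs : IsSing H α x)
    (hμ : IsDomInt hc μ) (hκ : IsDomInt hc (wtc α μ c)) : c = 0 := by
  obtain ⟨ι, _, b, χ, hb⟩ := exists_basis H
  have h1 := cas_sing b t.base hb hw hs
  have h2 := cas_sing b t.base hb hxw hxs
  set κ := wtc α μ c with hκdef
  set R : Dual ℂ H := ∑ i, if IsPosRoot H α (χ i) then χ i else 0 with hR
  have hRa : ∀ h : H, (∑ i, if IsPosRoot H α (χ i) then χ i h else 0) = R h := by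
    intro h
    rw [hR, LinearMap.sum_apply]
    refine Finset.sum_congr rfl fun i _ => ?_
    split_ifs <;> simp
  rw [hRa] at h1 h2
  -- the Casimir is scalar on M
  have hall : ∀ y : M, cas b M y = (μ (tK μ) + R (tK μ)) • y := by
    let K : LieSubmodule ℂ L M :=
      { LinearMap.ker (cas b M - (μ (tK μ) + R (tK μ)) • LinearMap.id) with
        lie_mem := by
          intro y z hz
          simp only [AddSubsemigroup.mem_carrier, AddSubmonoid.mem_toSubsemigroup,
            Submodule.mem_toAddSubmonoid, LinearMap.mem_ker, LinearMap.sub_apply,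
            LinearMap.smul_apply, LinearMap.id_apply] at hz ⊢
          rw [cas_comm, sub_eq_zero.mp hz, lie_smul, sub_self] }
    have hK : LieSubmodule.lieSpan ℂ L {m} ≤ K := by
      rw [LieSubmodule.lieSpan_le, Set.singleton_subset_iff]
      change m ∈ LinearMap.ker (cas b M - (μ (tK μ) + R (tK μ)) • LinearMap.id)
      simp [h1]
    intro y
    have hy : y ∈ K := hK (by rw [hg]; trivial)
    change y ∈ LinearMap.ker (cas b M - (μ (tK μ) + R (tK μ)) • LinearMap.id) at hy
    simpa [sub_eq_zero] using hy
  rw [hall x] at h2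
  have h3 : μ (tK μ) + R (tK μ) = κ (tK κ) + R (tK κ) := smul_left_injective ℂ hx0 h2
  set δ : Dual ℂ H := ∑ j, (c j : ℂ) • α j with hδ
  have hμκ : μ = κ + δ := by rw [hκdef, wtc]; abel
  have h4 : μ (tK δ) + κ (tK δ) + R (tK δ) = 0 := by
    have e1 : μ (tK μ) = κ (tK κ) + κ (tK δ) + μ (tK δ) := by
      conv_lhs => rw [hμκ, tK_add, map_add, LinearMap.add_apply, tK_symm δ κ]
      rw [hμκ, LinearMap.add_apply]
    have e2 : R (tK μ) = R (tK κ) + R (tK δ) := by rw [hμκ, tK_add, map_add]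
    rw [e1, e2] at h3
    linear_combination h3
  choose p hp0 hp using tK_simple t
  choose n hn0 hn using rho_simple b t hb
  choose u hu using hμ
  choose v hv using hκ
  have h5 : tK δ = ∑ j, ((c j : ℂ) * p j) • hc j := by
    rw [hδ, tK_sum]
    refine Finset.sum_congr rfl fun j _ => ?_
    rw [tK_smul, hp, smul_smul]
  have h6 : ((∑ j, (c j : ℝ) * p j * (u j + v j + n j) : ℝ) : ℂ) = 0 := by
    rw [← h4, h5]
    simp only [map_sum, map_smul, smul_eq_mul]
    push_cast
    rw [← Finset.sum_add_distrib, ← Finset.sum_add_distrib]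
    refine Finset.sum_congr rfl fun j _ => ?_
    rw [hu, hv, ← hRa, hn]; ring
  have h7 : ∑ j, (c j : ℝ) * p j * (u j + v j + n j) = 0 := by exact_mod_cast h6
  rw [Finset.sum_eq_zero_iff_of_nonneg (fun j _ => by have := hp0 j; positivity)] at h7
  funext j
  have h8 := h7 j (Finset.mem_univ j)
  have h9 : (0 : ℝ) < u j + v j + n j := by have := hn0 j; positivity
  have := hp0 j
  have h10 : (c j : ℝ) = 0 := by
    rcases mul_eq_zero.mp h8 with h | h
    · rcases mul_eq_zero.mp h with h | h
      · exact h
      · linarith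
    · linarith
  exact_mod_cast h10

end irr

section uni

variable {L : Type} [LieRing L] [LieAlgebra ℂ L] [FiniteDimensional ℂ L] [LieAlgebra.IsKilling ℂ L]
  {H : LieSubalgebra ℂ L} [H.IsCartanSubalgebra] {r : ℕ} {α : Fin r → Dual ℂ H}
  {hc : Fin r → H} {e f : Fin r → L}
  {M : Type} [AddCommGroup M] [Module ℂ M] [LieRingModule L M] [LieModule ℂ L M]

lemma TD.pos_simple (t : TD H α hc e f) (j : Fin r) : IsPosRoot H α (α j) := by
  refine ⟨t.base.isRoot j, Pi.single j 1, ?_⟩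
  rw [Finset.sum_eq_single j] <;> simp +contextual

lemma dom_of_nil (t : TD H α hc e f) (i : Fin r) {κ : Dual ℂ H} {x : M} (h0 : x ≠ 0)
    (hw : IsW H κ x) (he : ⁅e i, x⁆ = 0) (hk : ∃ k : ℕ, ((toEnd ℂ L M (f i)) ^ k) x = 0) :
    ∃ n : ℕ, κ (hc i) = n ∧ ((toEnd ℂ L M (f i)) ^ (n + 1)) x = 0 := by
  have P : (t.isSl2 i).HasPrimitiveVectorWith x (κ (hc i)) := ⟨h0, hw (hc i), he⟩
  have hs := Nat.find_spec hk
  obtain ⟨n, hn⟩ : ∃ n, Nat.find hk = n + 1 := by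
    refine ⟨Nat.find hk - 1, ?_⟩
    have : Nat.find hk ≠ 0 := by
      intro h
      rw [h] at hs
      exact h0 (by simpa using hs)
    omega
  have hmin := Nat.find_min hk (m := n) (by omega)
  refine ⟨n, ?_, by rwa [hn] at hs⟩
  have h1 := P.lie_e_pow_succ_toEnd_f n
  rw [hn] at hs
  rw [hs, lie_zero, eq_comm, smul_eq_zero] at h1
  have h2 := h1.resolve_right hmin
  rcases mul_eq_zero.mp h2 with h | h
  · exfalso
    have : (n : ℂ) + 1 ≠ 0 := by exact_mod_cast Nat.succ_ne_zero n
    exact this h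
  · exact sub_eq_zero.mp h

lemma ad_nil_mem {χ : Dual ℂ H} (hχ : IsRoot H χ) {x : L} (hx : x ∈ rootSpace H ⇑χ) (y : L) :
    y ∈ (toEnd ℂ L L x).maxGenEigenspace 0 := by
  have h := LieAlgebra.isNilpotent_ad_of_mem_rootSpace (K := ℂ) H (χ := ⇑χ)
    (fun h => hχ.1 (by ext z; exact congrFun h z)) hx
  obtain ⟨k, hk⟩ := h
  rw [Module.End.mem_maxGenEigenspace]
  refine ⟨k, ?_⟩
  rw [zero_smul, sub_zero]
  have : toEnd ℂ L L x = ad ℂ L x := rfl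
  rw [this, hk]; rfl

lemma loc_nil {χ : Dual ℂ H} (hχ : IsRoot H χ) {z : L} (hz : z ∈ rootSpace H ⇑χ) {m : M}
    (hg : LieSubmodule.lieSpan ℂ L {m} = (⊤ : LieSubmodule ℂ L M))
    (hk : ∃ k : ℕ, ((toEnd ℂ L M z) ^ k) m = 0) (x : M) : ∃ k : ℕ, ((toEnd ℂ L M z) ^ k) x = 0 := by
  let K : LieSubmodule ℂ L M :=
    { (toEnd ℂ L M z).maxGenEigenspace 0 with
      lie_mem := by
        intro y w hw
        have := LieModule.lie_mem_maxGenEigenspace_toEnd (R := ℂ) (ad_nil_mem hχ hz y) hw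
        rw [add_zero] at this
        exact this }
  have hm : ∀ w, w ∈ K ↔ ∃ k : ℕ, ((toEnd ℂ L M z) ^ k) w = 0 := by
    intro w
    change w ∈ (toEnd ℂ L M z).maxGenEigenspace 0 ↔ _
    rw [Module.End.mem_maxGenEigenspace, zero_smul, sub_zero]
  have hK : LieSubmodule.lieSpan ℂ L {m} ≤ K := by
    rw [LieSubmodule.lieSpan_le, Set.singleton_subset_iff]
    exact (hm m).mpr hk
  exact (hm x).mp (hK (by rw [hg]; trivial))

lemma irr (t : TD H α hc e f) {μ : Dual ℂ H} {m : M} (hw : IsW H μ m)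
    (hs : IsSing H α m) (hg : LieSubmodule.lieSpan ℂ L {m} = (⊤ : LieSubmodule ℂ L M))
    (hk : ∀ i, ∃ k : ℕ, ((toEnd ℂ L M (f i)) ^ k) m = 0) (Q : LieSubmodule ℂ L M) (hQ : Q ≠ ⊥) :
    m ∈ Q := by
  by_cases hm0 : m = 0
  · rw [hm0]; exact Q.zero_mem
  obtain ⟨c, x, hxQ, hx0, hxw, hxs⟩ := exists_sing t.base hw hs hg Q hQ
  have hln := fun i => loc_nil (isRoot_neg (t.base.isRoot i)) (t.f_mem i) hg (hk i)
  have hc0 := casimir_eq t hw hs hg hx0 hxw hxs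
    (fun i => by
      obtain ⟨n, hn, -⟩ := dom_of_nil t i hm0 hw (hs _ (t.pos_simple i) _ (t.e_mem i)) (hk i)
      exact ⟨n, hn⟩)
    (fun i => by
      obtain ⟨n, hn, -⟩ := dom_of_nil t i hx0 hxw (hxs _ (t.pos_simple i) _ (t.e_mem i)) (hln i x)
      exact ⟨n, hn⟩)
  subst hc0
  have hwt : wtc α μ 0 = μ := by simp [wtc]
  rw [hwt] at hxw
  obtain ⟨a, ha⟩ := hw_decomp t.base hw hs hg x
  have h1 : x - a • m = 0 := mem_Sp_weight t.base (fun h => by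
    rw [lie_sub, lie_smul, hxw h, hw h, smul_sub, smul_comm]) ha
  rw [sub_eq_zero] at h1
  have ha0 : a ≠ 0 := by
    rintro rfl
    exact hx0 (by simpa using h1)
  have : m = a⁻¹ • x := by rw [h1, smul_smul, inv_mul_cancel₀ ha0, one_smul]
  rw [this]
  exact Q.smul_mem _ hxQ

/-- product of Lie modules -/
instance prodLRM (V M : Type) [AddCommGroup V] [LieRingModule L V] [AddCommGroup M]
    [LieRingModule L M] : LieRingModule L (V × M) where
  bracket x p := (⁅x, p.1⁆, ⁅x, p.2⁆)
  add_lie x y p := by ext <;> simp [add_lie]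
  lie_add x p q := by ext <;> simp [lie_add]
  leibniz_lie x y p := Prod.ext (leibniz_lie _ _ _) (leibniz_lie _ _ _)

lemma prod_lie (V M : Type) [AddCommGroup V] [LieRingModule L V] [AddCommGroup M]
    [LieRingModule L M] (x : L) (p : V × M) : ⁅x, p⁆ = (⁅x, p.1⁆, ⁅x, p.2⁆) := rfl

instance prodLM (V M : Type) [AddCommGroup V] [Module ℂ V] [LieRingModule L V] [LieModule ℂ L V]
    [AddCommGroup M] [Module ℂ M] [LieRingModule L M] [LieModule ℂ L M] :
    LieModule ℂ L (V × M) where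
  smul_lie a x p := by ext <;> simp [prod_lie]
  lie_smul a x p := by ext <;> simp [prod_lie]

lemma span_self_top (m : M) : LieSubmodule.lieSpan ℂ L
    {(⟨m, LieSubmodule.subset_lieSpan rfl⟩ : LieSubmodule.lieSpan ℂ L {m})} =
    (⊤ : LieSubmodule ℂ L (LieSubmodule.lieSpan ℂ L {m} : LieSubmodule ℂ L M)) := by
  set D : LieSubmodule ℂ L M := LieSubmodule.lieSpan ℂ L {m}
  set d : D := ⟨m, LieSubmodule.subset_lieSpan rfl⟩
  set P := LieSubmodule.lieSpan ℂ L {d}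
  have h1 : D ≤ P.map D.incl := by
    rw [LieSubmodule.lieSpan_le, Set.singleton_subset_iff]
    exact LieSubmodule.mem_map_of_mem (f := D.incl) (LieSubmodule.subset_lieSpan (s := {d}) rfl)
  rw [eq_top_iff]
  rintro ⟨x, hx⟩ -
  obtain ⟨y, hy, hyx⟩ := (LieSubmodule.mem_map x).mp (h1 hx)
  have : y = ⟨x, hx⟩ := Subtype.ext hyx
  rwa [← this]

lemma uni (t : TD H α hc e f) {μ : Dual ℂ H} {V : Type} [AddCommGroup V] [Module ℂ V]
    [LieRingModule L V] [LieModule ℂ L V] (hV : IsSimpleOrder (LieSubmodule ℂ L V))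
    {v : V} (hv0 : v ≠ 0) (hvw : IsW H μ v) (hvs : IsSing H α v)
    (hvk : ∀ i, ∃ k : ℕ, ((toEnd ℂ L V (f i)) ^ k) v = 0)
    {m : M} (hmw : IsW H μ m) (hms : IsSing H α m)
    (hmk : ∀ i, ∃ k : ℕ, ((toEnd ℂ L M (f i)) ^ k) m = 0) :
    ∃ φ : V →ₗ⁅ℂ, L⁆ M, φ v = m := by
  set D : LieSubmodule ℂ L (V × M) := LieSubmodule.lieSpan ℂ L {(v, m)} with hD
  set d : D := ⟨(v, m), LieSubmodule.subset_lieSpan rfl⟩ with hd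
  have hdg : LieSubmodule.lieSpan ℂ L {d} = ⊤ := span_self_top (v, m)
  have hdw : IsW H μ d := by
    intro h
    apply Subtype.ext
    change ⁅(h : L), (v, m)⁆ = μ h • (v, m)
    rw [prod_lie, hvw h, hmw h]; rfl
  have hds : IsSing H α d := by
    intro χ hχ x hx
    apply Subtype.ext
    change ⁅x, (v, m)⁆ = 0
    rw [prod_lie, hvs χ hχ x hx, hms χ hχ x hx]; rfl
  have hpow : ∀ (z : L) (k : ℕ), (((toEnd ℂ L D z) ^ k) d : V × M) =
      (((toEnd ℂ L V z) ^ k) v, ((toEnd ℂ L M z) ^ k) m) := by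
    intro z k
    induction k with
    | zero => simp [hd]
    | succ k ih =>
      rw [pow_succ', pow_succ', pow_succ']
      simp only [Module.End.mul_apply, toEnd_apply_apply, LieSubmodule.coe_bracket]
      rw [ih, prod_lie]
  have hdk : ∀ i, ∃ k : ℕ, ((toEnd ℂ L D (f i)) ^ k) d = 0 := by
    intro i
    obtain ⟨k1, h1⟩ := hvk i
    obtain ⟨k2, h2⟩ := hmk i
    refine ⟨k1 + k2, Subtype.ext ?_⟩
    rw [hpow, add_comm k1 k2, pow_add, Module.End.mul_apply, h1, map_zero, add_comm k2 k1, pow_add,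
      Module.End.mul_apply, h2, map_zero]; rfl
  let π1 : D →ₗ⁅ℂ, L⁆ V :=
    { toLinearMap := (LinearMap.fst ℂ V M) ∘ₗ D.toSubmodule.subtype
      map_lie' := fun {x y} => rfl }
  let π2 : D →ₗ⁅ℂ, L⁆ M :=
    { toLinearMap := (LinearMap.snd ℂ V M) ∘ₗ D.toSubmodule.subtype
      map_lie' := fun {x y} => rfl }
  have hker : π1.ker = ⊥ := by
    by_contra hne
    have := irr t hdw hds hdg hdk _ hne
    rw [LieModuleHom.mem_ker] at this
    exact hv0 this
  have hinj : Function.Injective π1 := by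
    rw [← LieModuleHom.ker_eq_bot]; exact hker
  have hsurj : Function.Surjective π1 := by
    rw [← LieModuleHom.range_eq_top]
    rcases hV.eq_bot_or_eq_top π1.range with h | h
    · exfalso
      have : v ∈ π1.range := (LieModuleHom.mem_range _ _).mpr ⟨d, rfl⟩
      rw [h] at this
      exact hv0 (by simpa using this)
    · exact h
  let E : D ≃ₗ[ℂ] V := LinearEquiv.ofBijective (π1 : D →ₗ[ℂ] V) ⟨hinj, hsurj⟩
  have hE : ∀ y, E y = π1 y := fun y => rfl
  refine ⟨{ toLinearMap := (π2 : D →ₗ[ℂ] M) ∘ₗ E.symm.toLinearMap, map_lie' := ?_ }, ?_⟩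
  · intro x y
    have : E.symm ⁅x, y⁆ = ⁅x, E.symm y⁆ := by
      apply E.injective
      rw [E.apply_symm_apply, hE, LieModuleHom.map_lie, ← hE, E.apply_symm_apply]
    change π2 (E.symm ⁅x, y⁆) = ⁅x, π2 (E.symm y)⁆
    rw [this, LieModuleHom.map_lie]
  · have : E.symm v = d := by
      apply E.injective
      rw [E.apply_symm_apply]; rfl
    change π2 (E.symm v) = m
    rw [this]; rfl

lemma nil_of_findim [FiniteDimensional ℂ M] {χ : Dual ℂ H} (hχ : IsRoot H χ) {z : L}
    (hz : z ∈ rootSpace H ⇑χ) {κ : Dual ℂ H} {m : M} (hm : IsW H κ m) :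
    ∃ k : ℕ, ((toEnd ℂ L M z) ^ k) m = 0 := by
  by_contra hne
  push Not at hne
  have hw : ∀ k : ℕ, IsW H (κ + (k : ℂ) • χ) (((toEnd ℂ L M z) ^ k) m) := by
    intro k
    induction k with
    | zero => simpa using hm
    | succ k ih =>
      rw [pow_succ', Module.End.mul_apply, toEnd_apply_apply]
      have := ih.lie hz
      convert this using 1
      push_cast
      rw [add_smul, one_smul]; abel
  obtain ⟨h, hh⟩ : ∃ h, χ h ≠ 0 := by
    by_contra hall
    push Not at hall
    exact hχ.1 (LinearMap.ext hall)
  have hli := Module.End.eigenvectors_linearIndependent' (toEnd ℂ L M (h : L))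
    (fun k : ℕ => (κ + (k : ℂ) • χ) h) (by
      intro a b hab
      simp only [LinearMap.add_apply, LinearMap.smul_apply, smul_eq_mul, add_right_inj] at hab
      have := mul_right_cancel₀ hh hab
      exact_mod_cast this) (fun k => ((toEnd ℂ L M z) ^ k) m)
    (fun k => ⟨Module.End.mem_eigenspace_iff.mpr (hw k h), hne k⟩)
  exact not_finite_iff_infinite.mpr (inferInstanceAs (Infinite ℕ)) hli.finite

end uni

section unip

variable {ι : Type} [Fintype ι] (ht : ι → ℤ)

/-- Coordinate ring of the unipotent group of strictly raising matrices. -/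
abbrev UB : Type := MvPolynomial {p : ι × ι // ht p.2 < ht p.1} ℂ

/-- generic unipotent matrix -/
noncomputable def nn : Matrix ι ι (UB ht) := fun i j =>
  if h : ht j < ht i then MvPolynomial.X ⟨(i, j), h⟩ else if i = j then 1 else 0

/-- strictly raising part -/
noncomputable def pl {R : Type} [Zero R] (a : Matrix ι ι R) : Matrix ι ι R := fun i j =>
  if ht j < ht i then a i j else 0

lemma nn_det : (nn ht).det = 1 := by
  have hT : (nn ht).BlockTriangular (fun i => - ht i) := by
    intro i j hij
    have h1 : ¬ ht j < ht i := by simp only at hij; omega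
    have h2 : i ≠ j := by rintro rfl; simp at hij
    simp [nn, h1, h2]
  rw [hT.det]
  apply Finset.prod_eq_one
  intro a _
  have : (nn ht).toSquareBlock (fun i => - ht i) a = 1 := by
    ext i j : 1
    have h1 : ¬ ht j < ht i := by
      have := i.2; have := j.2
      omega
    change nn ht i j = _
    simp only [nn, h1, dite_false, Matrix.one_apply, Subtype.ext_iff]
  rw [this, Matrix.det_one]

lemma nn_inv : nn ht * (nn ht)⁻¹ = 1 :=
  Matrix.mul_nonsing_inv _ (by rw [nn_det]; exact isUnit_one)

lemma inv_nn : (nn ht)⁻¹ * nn ht = 1 :=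
  Matrix.nonsing_inv_mul _ (by rw [nn_det]; exact isUnit_one)

/-- conjugation by the generic unipotent matrix -/
noncomputable def cj (A : Matrix ι ι ℂ) : Matrix ι ι (UB ht) :=
  nn ht * A.map (algebraMap ℂ (UB ht)) * (nn ht)⁻¹

/-- the vector field -/
noncomputable def DD (A : Matrix ι ι ℂ) : Derivation ℂ (UB ht) (UB ht) :=
  MvPolynomial.mkDerivation ℂ (fun s => (pl ht (cj ht A) * nn ht) s.1.1 s.1.2)

lemma D_mul (D : Derivation ℂ (UB ht) (UB ht)) (M N : Matrix ι ι (UB ht)) :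
    (M * N).map D = M.map D * N + M * N.map D := by
  ext i j : 1
  simp only [Matrix.map_apply, Matrix.mul_apply, Matrix.add_apply, map_sum, Derivation.leibniz,
    smul_eq_mul, ← Finset.sum_add_distrib]
  refine Finset.sum_congr rfl fun k _ => ?_
  ring

lemma pl_nn (a : Matrix ι ι (UB ht)) {i j : ι} (h : ¬ ht j < ht i) :
    (pl ht a * nn ht) i j = 0 := by
  rw [Matrix.mul_apply]
  refine Finset.sum_eq_zero fun (k : ι) _ => ?_
  by_cases h1 : ht k < ht i
  · have h2 : ¬ ht j < ht k := by omega
    have h3 : k ≠ j := by rintro rfl; exact h h1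
    simp [nn, h2, h3]
  · simp [pl, h1]

lemma D_nn (A : Matrix ι ι ℂ) : (nn ht).map (DD ht A) = pl ht (cj ht A) * nn ht := by
  ext i j : 1
  rw [Matrix.map_apply]
  by_cases h : ht j < ht i
  · have : nn ht i j = MvPolynomial.X ⟨(i, j), h⟩ := by simp [nn, h]
    rw [this, DD, MvPolynomial.mkDerivation_X]
  · rw [pl_nn ht _ h]
    by_cases h2 : i = j <;> simp [nn, h, h2]

lemma D_inv (A : Matrix ι ι ℂ) : ((nn ht)⁻¹).map (DD ht A) = - ((nn ht)⁻¹ * pl ht (cj ht A)) := by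
  have h := D_mul ht (DD ht A) (nn ht)⁻¹ (nn ht)
  rw [inv_nn, D_nn] at h
  have h0 : (1 : Matrix ι ι (UB ht)).map (DD ht A) = 0 := by
    ext i j : 1
    by_cases h2 : i = j <;> simp [Matrix.one_apply, h2]
  rw [h0] at h
  have h1 : ((nn ht)⁻¹).map (DD ht A) * nn ht = - ((nn ht)⁻¹ * pl ht (cj ht A)) * nn ht := by
    rw [eq_comm, add_eq_zero_iff_eq_neg] at h
    rw [h, neg_mul, mul_assoc]
  have h2 := congrArg (· * (nn ht)⁻¹) h1
  simpa only [mul_assoc, nn_inv, mul_one] using h2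

lemma D_cj (A C : Matrix ι ι ℂ) : (cj ht C).map (DD ht A) =
    pl ht (cj ht A) * cj ht C - cj ht C * pl ht (cj ht A) := by
  have h0 : (C.map (algebraMap ℂ (UB ht))).map (DD ht A) = 0 := by
    ext i j : 1
    simp only [Matrix.map_apply, Derivation.map_algebraMap, Matrix.zero_apply]
  conv_lhs => rw [cj]
  rw [D_mul, D_mul, h0, D_nn, D_inv, mul_zero, add_zero]
  rw [sub_eq_add_neg, mul_neg]
  simp only [cj, mul_assoc]

lemma cj_mul (A C : Matrix ι ι ℂ) : cj ht (A * C) = cj ht A * cj ht C := by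
  have : (A * C).map (algebraMap ℂ (UB ht)) =
      A.map (algebraMap ℂ (UB ht)) * C.map (algebraMap ℂ (UB ht)) := Matrix.map_mul
  simp only [cj, this, mul_assoc]
  congr 2
  rw [← mul_assoc (nn ht)⁻¹, inv_nn, one_mul]

lemma cj_add (A C : Matrix ι ι ℂ) : cj ht (A + C) = cj ht A + cj ht C := by
  have : (A + C).map (algebraMap ℂ (UB ht)) =
      A.map (algebraMap ℂ (UB ht)) + C.map (algebraMap ℂ (UB ht)) := by
    ext i j : 1; simp
  simp only [cj, this, mul_add, add_mul]

lemma cj_sub (A C : Matrix ι ι ℂ) : cj ht (A - C) = cj ht A - cj ht C := by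
  have := cj_add ht (A - C) C
  rw [sub_add_cancel] at this
  rw [this, add_sub_cancel_right]

lemma cj_smul (c : ℂ) (A : Matrix ι ι ℂ) : cj ht (c • A) = c • cj ht A := by
  have : (c • A).map (algebraMap ℂ (UB ht)) = c • A.map (algebraMap ℂ (UB ht)) := by
    ext i j : 1
    simp only [Matrix.map_apply, Matrix.smul_apply, smul_eq_mul, map_mul]
    rw [Algebra.smul_def]
  simp only [cj, this, Matrix.mul_smul, Matrix.smul_mul]

lemma pl_add (a c : Matrix ι ι (UB ht)) : pl ht (a + c) = pl ht a + pl ht c := by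
  ext i j : 1
  by_cases h : ht j < ht i <;> simp [pl, h]

lemma pl_sub (a c : Matrix ι ι (UB ht)) : pl ht (a - c) = pl ht a - pl ht c := by
  ext i j : 1
  by_cases h : ht j < ht i <;> simp [pl, h]

lemma pl_smul (x : ℂ) (a : Matrix ι ι (UB ht)) : pl ht (x • a) = x • pl ht a := by
  ext i j : 1
  by_cases h : ht j < ht i <;> simp [pl, h]

lemma pl_pl (a c : Matrix ι ι (UB ht)) : pl ht (pl ht a * pl ht c) = pl ht a * pl ht c := by
  ext i j : 1
  by_cases h : ht j < ht i
  · simp [pl, h]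
  · conv_lhs => rw [pl]
    rw [if_neg h, eq_comm, Matrix.mul_apply]
    refine Finset.sum_eq_zero fun (k : ι) _ => ?_
    by_cases h1 : ht k < ht i
    · have h2 : ¬ ht j < ht k := by omega
      simp [pl, h2]
    · simp [pl, h1]

lemma pl_low (a c : Matrix ι ι (UB ht)) : pl ht ((a - pl ht a) * (c - pl ht c)) = 0 := by
  ext i j : 1
  by_cases h : ht j < ht i
  · conv_lhs => rw [pl]
    rw [if_pos h, Matrix.mul_apply, Matrix.zero_apply]
    refine Finset.sum_eq_zero fun (k : ι) _ => ?_
    by_cases h1 : ht k < ht i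
    · simp [pl, h1]
    · have h2 : ht j < ht k := by omega
      simp [pl, h2]
  · simp [pl, h]

lemma D_pl (D : Derivation ℂ (UB ht) (UB ht)) (a : Matrix ι ι (UB ht)) :
    (pl ht a).map D = pl ht (a.map D) := by
  ext i j : 1
  by_cases h : ht j < ht i <;> simp [pl, h]

lemma pl_ident (a c : Matrix ι ι (UB ht)) :
    pl ht (pl ht a * c - c * pl ht a) - pl ht (pl ht c * a - a * pl ht c)
      + (pl ht c * pl ht a - pl ht a * pl ht c) = pl ht (a * c - c * a) := by
  have h1 := pl_low ht a c
  have h2 := pl_low ht c a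
  simp only [sub_mul, mul_sub, pl_sub, pl_pl] at *
  have h1' := h1
  have h2' := h2
  rw [sub_eq_zero] at h1 h2
  have e1 : pl ht (a * c) = pl ht (pl ht a * c) + (pl ht (a * pl ht c) - pl ht a * pl ht c) := by
    rw [← h1]; abel
  have e2 : pl ht (c * a) = pl ht (pl ht c * a) + (pl ht (c * pl ht a) - pl ht c * pl ht a) := by
    rw [← h2]; abel
  rw [e1, e2]; abel

lemma ring_aux {R : Type} [Ring R] (X Y p q n : R) :
    X * n + q * (p * n) - (Y * n + p * (q * n)) = (X - Y + (q * p - p * q)) * n := by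
  noncomm_ring

lemma DD_lie (A C : Matrix ι ι ℂ) : ⁅DD ht A, DD ht C⁆ = DD ht (A * C - C * A) := by
  have key : (nn ht).map ⇑⁅DD ht A, DD ht C⁆ = (nn ht).map (DD ht (A * C - C * A)) := by
    have e : (nn ht).map ⇑⁅DD ht A, DD ht C⁆ = ((nn ht).map (DD ht C)).map (DD ht A) -
        ((nn ht).map (DD ht A)).map (DD ht C) := by
      ext i j : 1
      simp [Derivation.commutator_apply]
    rw [e]
    simp only [D_nn, D_mul, D_pl, D_cj, cj_sub, cj_mul]
    rw [← pl_ident ht (cj ht A) (cj ht C)]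
    exact ring_aux (R := Matrix ι ι (UB ht)) _ _ _ _ _
  apply MvPolynomial.derivation_ext
  rintro ⟨⟨i, j⟩, h⟩
  have := congrFun (congrFun key i) j
  simp only [Matrix.map_apply] at this
  have hn : nn ht i j = MvPolynomial.X ⟨(i, j), h⟩ := by
    have h' : ht j < ht i := h
    simp [nn, h']
  rwa [hn] at this

lemma DD_add (A C : Matrix ι ι ℂ) : DD ht (A + C) = DD ht A + DD ht C := by
  apply MvPolynomial.derivation_ext
  rintro ⟨⟨i, j⟩, h⟩
  simp [DD, MvPolynomial.mkDerivation_X, cj_add, pl_add, add_mul]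

lemma DD_smul (c : ℂ) (A : Matrix ι ι ℂ) : DD ht (c • A) = c • DD ht A := by
  apply MvPolynomial.derivation_ext
  rintro ⟨⟨i, j⟩, h⟩
  simp [DD, MvPolynomial.mkDerivation_X, cj_smul, pl_smul]

/-- evaluation at the identity -/
noncomputable def ev0 : UB ht →ₐ[ℂ] ℂ := MvPolynomial.aeval (fun _ => 0)

lemma ev_nn : (nn ht).map (ev0 ht) = 1 := by
  ext i j : 1
  by_cases h : ht j < ht i
  · have : i ≠ j := by rintro rfl; simp at h
    simp [nn, h, ev0, this, Matrix.one_apply]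
  · by_cases h2 : i = j <;> simp [nn, h, h2, Matrix.one_apply]

lemma ev_inv : ((nn ht)⁻¹).map (ev0 ht) = 1 := by
  have h : ((nn ht)⁻¹ * nn ht).map (ev0 ht) = ((nn ht)⁻¹).map (ev0 ht) * (nn ht).map (ev0 ht) :=
    Matrix.map_mul
  rw [ev_nn, mul_one, inv_nn] at h
  rw [← h]
  ext i j : 1
  by_cases h2 : i = j <;> simp [Matrix.one_apply, h2]

lemma ev_cj (A : Matrix ι ι ℂ) : (cj ht A).map (ev0 ht) = A := by
  have h : (cj ht A).map (ev0 ht) = (nn ht).map (ev0 ht) *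
      (A.map (algebraMap ℂ (UB ht))).map (ev0 ht) * ((nn ht)⁻¹).map (ev0 ht) := by
    rw [cj, ← Matrix.map_mul, ← Matrix.map_mul]
  rw [h, ev_nn, ev_inv, one_mul, mul_one]
  ext i j
  simp

lemma ev_DD (A : Matrix ι ι ℂ) (hA : pl ht A = 0) (q : UB ht) : ev0 ht (DD ht A q) = 0 := by
  have hnn : ∀ i j, ev0 ht ((pl ht (cj ht A) * nn ht) i j) = 0 := by
    intro i j
    rw [Matrix.mul_apply, map_sum]
    refine Finset.sum_eq_zero fun (k : ι) _ => ?_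
    rw [map_mul]
    have h1 : ev0 ht (pl ht (cj ht A) i k) = pl ht A i k := by
      by_cases h : ht k < ht i
      · simp only [pl, h, if_true]
        exact congrFun (congrFun (ev_cj ht A) i) k
      · simp [pl, h]
    rw [h1, hA]; simp
  induction q using MvPolynomial.induction_on with
  | C a => rw [MvPolynomial.derivation_C, map_zero]
  | add p q hp hq => rw [map_add, map_add, hp, hq, add_zero]
  | mul_X p s hp =>
    rw [Derivation.leibniz, map_add, smul_eq_mul, smul_eq_mul, map_mul, map_mul, hp, DD,
      MvPolynomial.mkDerivation_X, hnn]
    simp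

lemma nn_low {i j : ι} (h : ¬ ht j < ht i) : nn ht i j = (1 : Matrix ι ι (UB ht)) i j := by
  by_cases h2 : i = j <;> simp [nn, h, h2, Matrix.one_apply]

lemma inv_low {i j : ι} (h : ht i < ht j) : (nn ht)⁻¹ i j = 0 := by
  have hT : (nn ht).BlockTriangular (fun i => - ht i) := by
    intro i j hij
    have h1 : ¬ ht j < ht i := by simp only at hij; omega
    have h2 : i ≠ j := by rintro rfl; simp at hij
    simp [nn, h1, h2]
  have hu : IsUnit (nn ht) := by
    rw [Matrix.isUnit_iff_isUnit_det, nn_det]; exact isUnit_one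
  have := hu.invertible
  exact Matrix.blockTriangular_inv_of_blockTriangular hT (neg_lt_neg h)

lemma strict_mul_inv (s : Matrix ι ι (UB ht)) (hs : ∀ i j, ¬ ht j < ht i → s i j = 0) :
    pl ht (s * (nn ht)⁻¹) = s * (nn ht)⁻¹ := by
  ext i j : 1
  by_cases h : ht j < ht i
  · simp [pl, h]
  · conv_lhs => rw [pl]
    rw [if_neg h, eq_comm, Matrix.mul_apply]
    refine Finset.sum_eq_zero fun (k : ι) _ => ?_
    by_cases h1 : ht k < ht i
    · rw [inv_low ht (show ht k < ht j by omega), mul_zero]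
    · rw [hs i k h1, zero_mul]

lemma pl_cj_raise (A : Matrix ι ι ℂ) (hA : ∀ i j, ¬ ht j < ht i → A i j = 0) :
    pl ht (cj ht A) = cj ht A := by
  apply strict_mul_inv
  intro i j h
  rw [Matrix.mul_apply]
  refine Finset.sum_eq_zero fun (k : ι) _ => ?_
  by_cases h1 : ht j < ht k
  · have h2 : ¬ ht k < ht i := by omega
    have h3 : i ≠ k := by rintro rfl; exact h h1
    simp [nn, h2, h3]
  · rw [Matrix.map_apply, hA k j h1, map_zero, mul_zero]

lemma pl_cj_diag (d : ι → ℂ) : cj ht (Matrix.diagonal d) - pl ht (cj ht (Matrix.diagonal d)) =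
    Matrix.diagonal (fun i => algebraMap ℂ (UB ht) (d i)) := by
  set E : Matrix ι ι (UB ht) := Matrix.diagonal (fun i => algebraMap ℂ (UB ht) (d i)) with hE
  have e0 : (Matrix.diagonal d).map (algebraMap ℂ (UB ht)) = E := by
    rw [Matrix.diagonal_map (map_zero _)]
  have e1 : cj ht (Matrix.diagonal d) = E + (nn ht * E - E * nn ht) * (nn ht)⁻¹ := by
    rw [cj, e0, sub_mul, mul_assoc E, nn_inv]; simp
  have e2 : pl ht ((nn ht * E - E * nn ht) * (nn ht)⁻¹) =
      (nn ht * E - E * nn ht) * (nn ht)⁻¹ := by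
    apply strict_mul_inv
    intro i j h
    rw [Matrix.sub_apply, hE, Matrix.mul_diagonal, Matrix.diagonal_mul, nn_low ht h]
    by_cases h2 : i = j
    · subst h2; ring
    · simp [Matrix.one_apply, h2]
  have e3 : pl ht E = 0 := by
    ext i j : 1
    by_cases h : ht j < ht i
    · have : i ≠ j := by rintro rfl; simp at h
      simp [pl, hE, this]
    · simp [pl, h]
  rw [e1, pl_add, e2, e3]; simp

/-- Packaged coordinate ring module. -/
lemma exists_B {L : Type} [LieRing L] [LieAlgebra ℂ L] (A : L →ₗ[ℂ] Matrix ι ι ℂ)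
    (hA : ∀ x y, A ⁅x, y⁆ = A x * A y - A y * A x) :
    ∃ (B : Type) (_ : AddCommGroup B) (_ : Module ℂ B) (_ : LieRingModule L B)
      (_ : LieModule ℂ L B) (N : ι → ι → B) (ev : B →ₗ[ℂ] ℂ),
      (∀ k i, ev (N k i) = if k = i then 1 else 0) ∧
      (∀ x, (∀ i j, ¬ ht j < ht i → A x i j = 0) → ∀ k i,
        ⁅x, N k i⁆ + ∑ l, A x k l • N l i = 0) ∧
      (∀ x d, A x = Matrix.diagonal d → ∀ k i,
        ⁅x, N k i⁆ + ∑ l, A x k l • N l i = d i • N k i) ∧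
      (∀ x, (∀ i j, ht j < ht i → A x i j = 0) → ∀ q : B, ev ⁅x, q⁆ = 0) := by
  let i1 : LieRingModule L (UB ht) :=
    { bracket := fun x q => DD ht (A x) q
      add_lie := fun x y q => by
        change DD ht (A (x + y)) q = _
        rw [map_add, DD_add]; rfl
      lie_add := fun x p q => map_add _ p q
      leibniz_lie := fun x y q => by
        change DD ht (A x) (DD ht (A y) q) = DD ht (A ⁅x, y⁆) q + DD ht (A y) (DD ht (A x) q)
        rw [hA, ← DD_lie, Derivation.commutator_apply, sub_add_cancel] }
  let i2 : LieModule ℂ L (UB ht) :=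
    { smul_lie := fun c x q => by
        change DD ht (A (c • x)) q = c • DD ht (A x) q
        rw [map_smul, DD_smul]; rfl
      lie_smul := fun c x q => Derivation.map_smul (DD ht (A x)) c q }
  have hb : ∀ (x : L) (q : UB ht), ⁅x, q⁆ = DD ht (A x) q := fun x q => rfl
  have hN : ∀ x k i, ⁅x, (nn ht)⁻¹ k i⁆ + ∑ l, A x k l • (nn ht)⁻¹ l i =
      ((nn ht)⁻¹ * (cj ht (A x) - pl ht (cj ht (A x)))) k i := by
    intro x k i
    have h1 : ⁅x, (nn ht)⁻¹ k i⁆ = (- ((nn ht)⁻¹ * pl ht (cj ht (A x)))) k i := by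
      rw [hb, ← D_inv]; rfl
    have h2 : ∑ l, A x k l • (nn ht)⁻¹ l i =
        ((A x).map (algebraMap ℂ (UB ht)) * (nn ht)⁻¹) k i := by
      rw [Matrix.mul_apply]
      refine Finset.sum_congr rfl fun (l : ι) _ => ?_
      rw [Algebra.smul_def]; rfl
    have h3 : (nn ht)⁻¹ * cj ht (A x) = (A x).map (algebraMap ℂ (UB ht)) * (nn ht)⁻¹ := by
      rw [cj, mul_assoc, ← mul_assoc, inv_nn, one_mul]
    rw [h1, h2, mul_sub, h3, Matrix.sub_apply, Matrix.neg_apply]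
    abel
  refine ⟨UB ht, inferInstance, inferInstance, i1, i2, fun k i => (nn ht)⁻¹ k i,
    (ev0 ht).toLinearMap, ?_, ?_, ?_, ?_⟩
  · intro k i
    have := congrFun (congrFun (ev_inv ht) k) i
    rw [Matrix.one_apply] at this
    exact this
  · intro x hx k i
    rw [hN, pl_cj_raise ht _ hx, sub_self, mul_zero]; rfl
  · intro x d hx k i
    rw [hN, hx, pl_cj_diag, Matrix.mul_diagonal, Algebra.smul_def, mul_comm]
  · intro x hx q
    rw [hb]
    apply ev_DD
    ext i j
    by_cases h : ht j < ht i
    · simp [pl, h, hx i j h]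
    · simp [pl, h]

end unip

section exM

variable {L : Type} [LieRing L] [LieAlgebra ℂ L] [FiniteDimensional ℂ L] [LieAlgebra.IsKilling ℂ L]
  {H : LieSubalgebra ℂ L} [H.IsCartanSubalgebra] {r : ℕ} {α : Fin r → Dual ℂ H}
  {hc : Fin r → H} {e f : Fin r → L}

lemma exists_h0 (hb : IsBase H α) : ∃ h0 : H, ∀ i, α i h0 = 1 := by
  obtain ⟨g, hg⟩ := LinearMap.exists_leftInverse_of_injective
    (Finsupp.linearCombination ℂ α) (LinearMap.ker_eq_bot.mpr hb.indep)
  let s : (Fin r →₀ ℂ) →ₗ[ℂ] ℂ := Finsupp.linearCombination ℂ (fun _ => (1 : ℂ))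
  refine ⟨(Module.evalEquiv ℂ H).symm (s ∘ₗ g), fun i => ?_⟩
  rw [Module.apply_evalEquiv_symm_apply]
  have := LinearMap.congr_fun hg (Finsupp.single i 1)
  simp only [LinearMap.comp_apply, Finsupp.linearCombination_single, one_smul,
    LinearMap.id_apply] at this
  rw [LinearMap.comp_apply, this]
  simp [s]

lemma pos_ht {h0 : H} (h : ∀ i, α i h0 = 1) {χ : Dual ℂ H} (hχ : IsPosRoot H α χ) :
    ∃ n : ℕ, 0 < n ∧ χ h0 = n := by
  obtain ⟨hr, c, hc⟩ := hχ
  refine ⟨∑ j, c j, ?_, ?_⟩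
  · rw [Nat.pos_iff_ne_zero]
    intro h0
    apply hr.1
    rw [hc]
    refine Finset.sum_eq_zero fun j hj => ?_
    rw [Finset.sum_eq_zero_iff.mp h0 j hj]; simp
  · rw [hc]; simp [h]

lemma exists_M (t : TD H α hc e f) {γ lam : Dual ℂ H} {xg : L} (hx : xg ∈ rootSpace H ⇑γ)
    {W : Type} [AddCommGroup W] [Module ℂ W] [LieRingModule L W] [LieModule ℂ L W]
    {w : W} (hww : IsW H lam w) (hws : IsSing H α w) (ε : W →ₗ[ℂ] ℂ) (hε : ε w = 1)
    (hεn : ∀ χ, IsPosRoot H (-α) χ → ∀ x ∈ rootSpace H ⇑χ, ∀ y, ε ⁅x, y⁆ = 0) :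
    ∃ (M : Type) (_ : AddCommGroup M) (_ : Module ℂ M) (_ : LieRingModule L M)
      (_ : LieModule ℂ L M) (m : M) (p : M →ₗ[ℂ] L),
      IsW H (lam + γ) m ∧ IsSing H α m ∧
      (∀ χ, IsPosRoot H (-α) χ → ∀ x ∈ rootSpace H ⇑χ, ∀ y, p ⁅x, y⁆ = ⁅x, p y⁆) ∧
      p m = xg := by
  obtain ⟨ι, _, b, χ, hbχ⟩ := exists_basis H
  obtain ⟨h0, hh0⟩ := exists_h0 t.base
  have hht : ∀ i, ∃ n : ℤ, χ i h0 = n := by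
    intro i
    rcases rs_cases (hbχ i) (b.ne_zero i) with h | h
    · exact ⟨0, by simp [h]⟩
    · rcases pos_or_neg t.base h with h | h
      · obtain ⟨n, -, hn⟩ := pos_ht hh0 h
        exact ⟨n, by simp [hn]⟩
      · rw [← neg_neg (χ i), isPosRoot_neg] at h
        obtain ⟨n, -, hn⟩ := pos_ht hh0 h
        refine ⟨-n, ?_⟩
        rw [LinearMap.neg_apply, neg_eq_iff_eq_neg] at hn
        simp [hn]
  choose ht hht using hht
  let A : L →ₗ[ℂ] Matrix ι ι ℂ :=
    { toFun := fun x i j => b.repr ⁅x, b j⁆ i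
      map_add' := fun x y => by ext i j; simp; rfl
      map_smul' := fun c x => by ext i j; simp; rfl }
  have hAap : ∀ x i j, A x i j = b.repr ⁅x, b j⁆ i := fun x i j => rfl
  have hA' : ∀ x, A x = LinearMap.toMatrix b b (toEnd ℂ L L x) := by
    intro x; ext i j
    rw [hAap, LinearMap.toMatrix_apply]; rfl
  have hA : ∀ x y, A ⁅x, y⁆ = A x * A y - A y * A x := by
    intro x y
    rw [hA', hA', hA', ← LinearMap.toMatrix_mul, ← LinearMap.toMatrix_mul, ← map_sub]
    congr 1
    ext z
    simp
  have hroot : ∀ ψ : Dual ℂ H, ∀ x ∈ rootSpace H ⇑ψ, ∀ i j, A x i j ≠ 0 →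
      χ i = ψ + χ j := by
    intro ψ x hx i j hij
    rw [hAap] at hij
    exact repr_wt b hbχ (rs_lie hx (hbχ j)) hij
  obtain ⟨B, _, _, _, _, N, ev, hev, hraise, hdiag, hlow⟩ := exists_B ht A hA
  let mi : ι → B ⊗[ℂ] (L ⊗[ℂ] W) := fun i => ∑ k, N k i ⊗ₜ[ℂ] (b k ⊗ₜ[ℂ] w)
  have hmi : ∀ (x : L) i, ⁅x, mi i⁆ = ∑ k, (⁅x, N k i⁆ + ∑ l, A x k l • N l i) ⊗ₜ[ℂ] (b k ⊗ₜ[ℂ] w)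
      + ∑ k, N k i ⊗ₜ[ℂ] (b k ⊗ₜ[ℂ] ⁅x, w⁆) := by
    intro x i
    have e1 : ∑ k, N k i ⊗ₜ[ℂ] (⁅x, b k⁆ ⊗ₜ[ℂ] w) =
        ∑ k, (∑ l, A x k l • N l i) ⊗ₜ[ℂ] (b k ⊗ₜ[ℂ] w) := by
      have : ∀ k, N k i ⊗ₜ[ℂ] (⁅x, b k⁆ ⊗ₜ[ℂ] w) =
          ∑ l, A x l k • (N k i ⊗ₜ[ℂ] (b l ⊗ₜ[ℂ] w)) := by
        intro k
        conv_lhs => rw [← b.sum_repr ⁅x, b k⁆]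
        simp only [TensorProduct.sum_tmul, TensorProduct.tmul_sum, hAap,
          ← TensorProduct.smul_tmul', TensorProduct.tmul_smul]
      simp only [this, TensorProduct.sum_tmul, ← TensorProduct.smul_tmul']
      rw [Finset.sum_comm]
    simp only [mi, lie_sum, TensorProduct.LieModule.lie_tmul_right, TensorProduct.add_tmul,
      TensorProduct.tmul_add, Finset.sum_add_distrib]
    rw [e1]
    abel
  let T : L ⊗[ℂ] W →ₗ[ℂ] L := (TensorProduct.rid ℂ L).toLinearMap ∘ₗ LinearMap.lTensor L ε
  let p : B ⊗[ℂ] (L ⊗[ℂ] W) →ₗ[ℂ] L := TensorProduct.lift (ev.smulRight T)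
  have hp : ∀ q x w', p (q ⊗ₜ[ℂ] (x ⊗ₜ[ℂ] w')) = ev q • ε w' • x := by
    intro q x w'
    simp [p, T]
  refine ⟨B ⊗[ℂ] (L ⊗[ℂ] W), inferInstance, inferInstance, inferInstance, inferInstance,
    ∑ i, b.repr xg i • mi i, p, ?_, ?_, ?_, ?_⟩
  · intro h
    rw [lie_sum, Finset.smul_sum]
    refine Finset.sum_congr rfl fun i _ => ?_
    by_cases hi : b.repr xg i = 0
    · simp [hi]
    have hγ : χ i = γ := repr_wt b hbχ hx hi
    have hd : A (h : L) = Matrix.diagonal (fun i => χ i h) := by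
      ext i j
      rw [hAap, (mem_rs.mp (hbχ j)) h, map_smul, Finsupp.smul_apply, Basis.repr_self,
        Matrix.diagonal_apply, Finsupp.single_apply]
      by_cases hij : i = j
      · subst hij; simp
      · simp [hij, Ne.symm hij]
    have hw1 : ⁅(h : L), w⁆ = lam h • w := hww h
    rw [lie_smul, hmi, smul_comm]
    congr 1
    simp only [hdiag _ _ hd, hw1, ← TensorProduct.smul_tmul', TensorProduct.tmul_smul, hγ, mi,
      LinearMap.add_apply, add_smul, ← Finset.smul_sum]
    rw [add_comm]
  · intro δ hδ x hx'
    rw [lie_sum]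
    refine Finset.sum_eq_zero fun i _ => ?_
    have hr : ∀ i j, ¬ ht j < ht i → A x i j = 0 := by
      intro i j hij
      by_contra hne
      have h1 := hroot δ x hx' i j hne
      obtain ⟨n, hn0, hn⟩ := pos_ht hh0 hδ
      have h2 := LinearMap.congr_fun h1 h0
      rw [LinearMap.add_apply, hht, hht, hn] at h2
      have h3 : ht i = n + ht j := by exact_mod_cast h2
      omega
    have hw1 : ⁅x, w⁆ = 0 := hws δ hδ x hx'
    rw [lie_smul, hmi]
    simp [hraise x hr, hw1]
  · intro δ hδ x hx' y
    have hr : ∀ i j, ht j < ht i → A x i j = 0 := by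
      intro i j hij
      by_contra hne
      have h1 := hroot δ x hx' i j hne
      rw [← neg_neg δ, isPosRoot_neg] at hδ
      obtain ⟨n, hn0, hn⟩ := pos_ht hh0 hδ
      rw [LinearMap.neg_apply, neg_eq_iff_eq_neg] at hn
      have h2 := LinearMap.congr_fun h1 h0
      rw [LinearMap.add_apply, hht, hht, hn] at h2
      have h3 : ht i = -n + ht j := by exact_mod_cast h2
      omega
    induction y using TensorProduct.induction_on with
    | zero => simp
    | add y z hy hz => rw [lie_add, map_add, map_add, hy, hz, lie_add]
    | tmul q z =>
      induction z using TensorProduct.induction_on with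
      | zero => simp
      | add y z hy hz => rw [TensorProduct.tmul_add, lie_add, map_add, map_add, hy, hz, lie_add]
      | tmul y z =>
        rw [TensorProduct.LieModule.lie_tmul_right, TensorProduct.LieModule.lie_tmul_right,
          TensorProduct.tmul_add, map_add, map_add, hp, hp, hp, hp, hlow x hr, hεn δ hδ x hx']
        simp
  · rw [map_sum]
    conv_rhs => rw [← b.sum_repr xg]
    refine Finset.sum_congr rfl fun i _ => ?_
    rw [map_smul]
    congr 1
    simp [mi, hp, hev, hε]

end exM

section thmA

variable {L : Type} [LieRing L] [LieAlgebra ℂ L] [FiniteDimensional ℂ L] [LieAlgebra.IsKilling ℂ L]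
  {H : LieSubalgebra ℂ L} [H.IsCartanSubalgebra] {r : ℕ} {α : Fin r → Dual ℂ H}
  {hc : Fin r → H} {e f : Fin r → L}
  {M : Type} [AddCommGroup M] [Module ℂ M] [LieRingModule L M] [LieModule ℂ L M]

lemma TD.e_ne (t : TD H α hc e f) (i : Fin r) : e i ≠ 0 := by
  intro h
  have h1 := t.lie_ef i
  rw [h, zero_lie] at h1
  have : hc i = 0 := Subtype.ext h1.symm
  have h2 := t.two i
  rw [this, map_zero] at h2
  norm_num at h2

lemma pow_other (t : TD H α hc e f) (i : Fin r) {m : M} (hs : IsSing H α m) (n : ℕ) :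
    ∀ δ, IsPosRoot H α δ → δ ≠ α i → ∀ x ∈ rootSpace H ⇑δ,
      ⁅x, ((toEnd ℂ L M (f i)) ^ n) m⁆ = 0 := by
  induction n with
  | zero => intro δ hδ _ x hx; simpa using hs δ hδ x hx
  | succ n ih =>
    intro δ hδ hne x hx
    rw [pow_succ', Module.End.mul_apply, toEnd_apply_apply, leibniz_lie, ih δ hδ hne x hx, lie_zero,
      add_zero]
    by_cases h0 : ⁅x, f i⁆ = 0
    · rw [h0, zero_lie]
    have hmem : ⁅x, f i⁆ ∈ rootSpace H ⇑(δ - α i) := by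
      have := rs_lie hx (t.f_mem i)
      rwa [← sub_eq_add_neg] at this
    rcases rs_cases hmem h0 with h | h
    · exact absurd (sub_eq_zero.mp h) hne
    · refine ih _ (pos_sub t i hδ h) ?_ _ hmem
      intro h2
      have h3 : δ = α i + α i := by rw [← h2]; rw [sub_eq_iff_eq_add] at h2; rw [h2]; abel
      exact not_isRoot_two (t.base.isRoot i) (h3 ▸ hδ.1)

lemma pow_sing (t : TD H α hc e f) (i : Fin r) {κ : Dual ℂ H} {m : M} (hw : IsW H κ m)
    (hs : IsSing H α m) {k : ℕ} (hk : κ (hc i) = k) :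
    IsSing H α (((toEnd ℂ L M (f i)) ^ (k + 1)) m) := by
  by_cases hm : m = 0
  · intro δ hδ x hx; simp [hm]
  intro δ hδ x hx
  by_cases hne : δ = α i
  · subst hne
    obtain ⟨a, rfl⟩ := rs_one_dim (t.base.isRoot i) (t.e_mem i) hx (t.e_ne i)
    have P : (t.isSl2 i).HasPrimitiveVectorWith m (κ (hc i)) :=
      ⟨hm, hw (hc i), hs _ (t.pos_simple i) _ (t.e_mem i)⟩
    rw [smul_lie, P.lie_e_pow_succ_toEnd_f k, hk]
    simp
  · exact pow_other t i hs _ δ hδ hne x hx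

lemma pow_wt {χ : Dual ℂ H} {z : L} (hz : z ∈ rootSpace H ⇑χ) {κ : Dual ℂ H} {m : M}
    (hm : IsW H κ m) (k : ℕ) : IsW H (κ + (k : ℂ) • χ) (((toEnd ℂ L M z) ^ k) m) := by
  induction k with
  | zero => simpa using hm
  | succ k ih =>
    rw [pow_succ', Module.End.mul_apply, toEnd_apply_apply]
    have := ih.lie hz
    convert this using 1
    push_cast
    rw [add_smul, one_smul]; abel

lemma TD.neg_simple (t : TD H α hc e f) (i : Fin r) : IsPosRoot H (-α) (-α i) :=
  isPosRoot_neg.mpr (t.pos_simple i)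

lemma thmA (t : TD H α hc e f) {γ lam : Dual ℂ H} {xg : L} (hx : xg ∈ rootSpace H ⇑γ)
    {W : Type} [AddCommGroup W] [Module ℂ W] [LieRingModule L W] [LieModule ℂ L W]
    {w : W} (hww : IsW H lam w) (hws : IsSing H α w) (ε : W →ₗ[ℂ] ℂ) (hε : ε w = 1)
    (hεn : ∀ χ, IsPosRoot H (-α) χ → ∀ x ∈ rootSpace H ⇑χ, ∀ y, ε ⁅x, y⁆ = 0)
    {V : Type} [AddCommGroup V] [Module ℂ V]
    [LieRingModule L V] [LieModule ℂ L V] (hV : IsSimpleOrder (LieSubmodule ℂ L V))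
    {v : V} (hv0 : v ≠ 0) (hvw : IsW H (lam + γ) v) (hvs : IsSing H α v)
    (hvk : ∀ i, ∃ k : ℕ, ((toEnd ℂ L V (f i)) ^ k) v = 0)
    (hk : ∀ i, ∃ k : ℕ, (lam + γ) (hc i) = k ∧ ((toEnd ℂ L L (f i)) ^ (k + 1)) xg = 0) :
    ∃ φ : V →ₗ[ℂ] L, φ v = xg ∧
      ∀ χ, IsPosRoot H (-α) χ → ∀ x ∈ rootSpace H ⇑χ, ∀ y, φ ⁅x, y⁆ = ⁅x, φ y⁆ := by
  obtain ⟨M, _, _, _, _, m, p, hmw, hms, hpn, hpm⟩ := exists_M t hx hww hws ε hε hεn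
  choose k hk1 hk2 using hk
  let y : Fin r → M := fun i => ((toEnd ℂ L M (f i)) ^ (k i + 1)) m
  let K : LieSubmodule ℂ L M := ⨆ i, LieSubmodule.lieSpan ℂ L {y i}
  have hpp : ∀ i n, p (((toEnd ℂ L M (f i)) ^ n) m) = ((toEnd ℂ L L (f i)) ^ n) xg := by
    intro i n
    induction n with
    | zero => simpa using hpm
    | succ n ih =>
      rw [pow_succ', pow_succ', Module.End.mul_apply, Module.End.mul_apply, toEnd_apply_apply,
        toEnd_apply_apply, hpn _ (t.neg_simple i) _ (t.f_mem i), ih]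
  have hKp : K.toSubmodule ≤ LinearMap.ker p := by
    rw [LieSubmodule.iSup_toSubmodule]
    refine iSup_le fun i => ?_
    refine lemmaC_gen t.base (pow_wt (t.f_mem i) hmw (k i + 1)) (pow_sing t i hmw hms (hk1 i))
      (LinearMap.ker p) ?_ ?_
    · rw [LinearMap.mem_ker, hpp, hk2]
    · intro χ hχ x hx s hs
      rw [LinearMap.mem_ker] at hs ⊢
      rw [hpn χ hχ x hx, hs, lie_zero]
  let q : M →ₗ⁅ℂ, L⁆ M ⧸ K := LieSubmodule.Quotient.mk' K
  let pb : (M ⧸ K) →ₗ[ℂ] L := K.toSubmodule.liftQ p hKp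
  have hpb : ∀ z, pb (q z) = p z := fun z => rfl
  have hqpow : ∀ z n (s : M), q (((toEnd ℂ L M z) ^ n) s) = ((toEnd ℂ L (M ⧸ K) z) ^ n) (q s) := by
    intro z n s
    induction n with
    | zero => rfl
    | succ n ih =>
      rw [pow_succ', pow_succ', Module.End.mul_apply, Module.End.mul_apply, toEnd_apply_apply,
        toEnd_apply_apply, LieModuleHom.map_lie, ih]
  obtain ⟨Φ, hΦ⟩ := uni t hV hv0 hvw hvs hvk (m := q m)
    (fun h => by rw [← LieModuleHom.map_lie, hmw h, map_smul])
    (fun χ hχ x hx => by rw [← LieModuleHom.map_lie, hms χ hχ x hx, map_zero])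
    (fun i => ⟨k i + 1, by
      rw [← hqpow]
      refine (LieSubmodule.Quotient.mk_eq_zero K).mpr ?_
      exact (le_iSup (fun i => LieSubmodule.lieSpan ℂ L {y i}) i)
        (LieSubmodule.subset_lieSpan (s := {y i}) rfl)⟩)
  refine ⟨pb ∘ₗ (Φ : V →ₗ[ℂ] M ⧸ K), ?_, ?_⟩
  · change pb (Φ v) = xg
    rw [hΦ, hpb, hpm]
  · intro χ hχ x hx z
    change pb (Φ ⁅x, z⁆) = ⁅x, pb (Φ z)⁆
    obtain ⟨s, hs⟩ := LieSubmodule.Quotient.surjective_mk' K (Φ z)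
    have hs' : q s = Φ z := hs
    rw [LieModuleHom.map_lie, ← hs', ← LieModuleHom.map_lie, hpb, hpb, hpn χ hχ x hx]

end thmA

section laced

variable {L : Type} [LieRing L] [LieAlgebra ℂ L] [FiniteDimensional ℂ L] [LieAlgebra.IsKilling ℂ L]
  {H : LieSubalgebra ℂ L} [H.IsCartanSubalgebra] {r : ℕ} {α : Fin r → Dual ℂ H}
  {hc : Fin r → H} {e f : Fin r → L}

lemma coroot_tK {χ : Dual ℂ H} (h : IsRoot H χ) :
    IsKilling.coroot h.wt = (2 * (χ (tK χ))⁻¹) • tK χ := by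
  have : (2 : ℕ) • (χ (tK χ))⁻¹ • tK χ = (2 * (χ (tK χ))⁻¹) • tK χ := by
    rw [two_mul, add_smul, two_smul]
  rw [← this]
  rfl

lemma laced_eq
    (hlaced : ∀ (χ ψ : Module.Dual ℂ H) (tχ tψ : H), IsRoot H χ → IsRoot H ψ →
      IsKillingDual H χ tχ → IsKillingDual H ψ tψ → χ tχ = ψ tψ)
    {χ ψ : Dual ℂ H} (hχ : IsRoot H χ) (hψ : IsRoot H ψ) {N : ℕ} (hN : 2 ≤ N)
    (h : ψ (IsKilling.coroot hχ.wt) = N) : ψ = χ := by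
  have hl : χ (tK χ) = ψ (tK ψ) := hlaced χ ψ _ _ hχ hψ (tK_apply χ) (tK_apply ψ)
  have hsw : χ (IsKilling.coroot hψ.wt) = N := by
    rw [← h, coroot_tK, coroot_tK, map_smul, map_smul, tK_symm χ ψ, hl]
  let i : H.root := ⟨hχ.wt, by simpa using hχ.wt_nz⟩
  let j : H.root := ⟨hψ.wt, by simpa using hψ.wt_nz⟩
  have h1 : (IsKilling.rootSystem H).pairing j i = N := h
  have h2 : (IsKilling.rootSystem H).pairing i j = N := hsw
  rw [← (IsKilling.rootSystem H).algebraMap_pairingIn ℤ] at h1 h2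
  have h1' : (IsKilling.rootSystem H).pairingIn ℤ j i = N := by
    have : (((IsKilling.rootSystem H).pairingIn ℤ j i : ℤ) : ℂ) = N := h1
    exact_mod_cast this
  have h2' : (IsKilling.rootSystem H).pairingIn ℤ i j = N := by
    have : (((IsKilling.rootSystem H).pairingIn ℤ i j : ℤ) : ℂ) = N := h2
    exact_mod_cast this
  by_contra hne
  have hij : (IsKilling.rootSystem H).root i ≠ (IsKilling.rootSystem H).root j := by
    intro h
    have h3 : hχ.wt.toLinear = hψ.wt.toLinear := h
    rw [hχ.wt_lin, hψ.wt_lin] at h3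
    exact hne h3.symm
  have hij' : (IsKilling.rootSystem H).root i ≠ - (IsKilling.rootSystem H).root j := by
    intro h'
    have h3 : hχ.wt.toLinear = - hψ.wt.toLinear := h'
    rw [hχ.wt_lin, hψ.wt_lin, eq_neg_iff_add_eq_zero, add_comm, ← eq_neg_iff_add_eq_zero] at h3
    have h4 := IsKilling.root_apply_coroot hχ.wt_nz
    have h5 : χ (IsKilling.coroot hχ.wt) = 2 := h4
    rw [h3, LinearMap.neg_apply, h5] at h
    have : (-2 : ℤ) = N := by exact_mod_cast h
    omega
  have := (IsKilling.rootSystem H).pairingIn_pairingIn_mem_set_of_isCrystal_of_isRed' i j hij hij'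
  rw [h1', h2'] at this
  simp only [Set.mem_insert_iff, Set.mem_singleton_iff, Prod.mk.injEq] at this
  omega

/-- vanishing of the iterated bracket -/
lemma nil_bound (t : TD H α hc e f)
    (hlaced : ∀ (χ ψ : Module.Dual ℂ H) (tχ tψ : H), IsRoot H χ → IsRoot H ψ →
      IsKillingDual H χ tχ → IsKillingDual H ψ tψ → χ tχ = ψ tψ)
    {β : Dual ℂ H} (hβ : IsRoot H β) {x : L} (hx : x ∈ rootSpace H ⇑β) (i : Fin r) {k n : ℕ}
    (h : β (hc i) = n - k) : ((toEnd ℂ L L (e i)) ^ (k + 1)) x = 0 := by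
  by_contra hne
  have hw : ((toEnd ℂ L L (e i)) ^ (k + 1)) x ∈ rootSpace H ⇑(β + ((k + 1 : ℕ) : ℂ) • α i) := by
    rw [mem_rs]
    exact pow_wt (t.e_mem i) (mem_rs.mp hx) (k + 1)
  set ψ := β + ((k + 1 : ℕ) : ℂ) • α i with hψ
  have hv : ψ (hc i) = ((n + k + 2 : ℕ) : ℂ) := by
    rw [hψ, LinearMap.add_apply, LinearMap.smul_apply, h, t.two i]
    push_cast
    rw [smul_eq_mul]; ring
  rcases rs_cases hw hne with h0 | h0
  · rw [h0, LinearMap.zero_apply] at hv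
    have : (0 : ℕ) = n + k + 2 := by exact_mod_cast hv
    omega
  · have h1 : ψ = α i := laced_eq hlaced (t.base.isRoot i) h0 (N := n + k + 2) (by omega)
      (by rw [← t.hc_eq]; exact hv)
    have h2 := hv
    rw [h1, t.two i] at h2
    have h3 : (2 : ℕ) = n + k + 2 := by exact_mod_cast h2
    have hk : k = 0 := by omega
    subst hk
    apply hβ.1
    rw [hψ] at h1
    simpa using h1

end laced

section dual

variable {L : Type} [LieRing L] [LieAlgebra ℂ L] [FiniteDimensional ℂ L] [LieAlgebra.IsKilling ℂ L]
  {H : LieSubalgebra ℂ L} [H.IsCartanSubalgebra] {r : ℕ} {α : Fin r → Dual ℂ H}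
  {hc : Fin r → H} {e f : Fin r → L}
  {V : Type} [AddCommGroup V] [Module ℂ V] [LieRingModule L V] [LieModule ℂ L V]

lemma gen_of_simple (hV : IsSimpleOrder (LieSubmodule ℂ L V)) {v : V} (hv : v ≠ 0) :
    LieSubmodule.lieSpan ℂ L {v} = (⊤ : LieSubmodule ℂ L V) := by
  rcases hV.eq_bot_or_eq_top (LieSubmodule.lieSpan ℂ L {v}) with h | h
  · exfalso
    have : v ∈ LieSubmodule.lieSpan ℂ L {v} := LieSubmodule.subset_lieSpan (s := {v}) rfl
    rw [h] at this
    exact hv (by simpa using this)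
  · exact h

lemma dual_simple [FiniteDimensional ℂ V] (hV : IsSimpleOrder (LieSubmodule ℂ L V)) :
    IsSimpleOrder (LieSubmodule ℂ L (V →ₗ[ℂ] ℂ)) := by
  have hco : ∀ Q : LieSubmodule ℂ L (V →ₗ[ℂ] ℂ), Q = ⊥ ∨ Q = ⊤ := by
    intro Q
    let A : LieSubmodule ℂ L V :=
      { Q.toSubmodule.dualCoannihilator with
        lie_mem := by
          intro x m hm
          change ⁅x, m⁆ ∈ Q.toSubmodule.dualCoannihilator
          have hm' : m ∈ Q.toSubmodule.dualCoannihilator := hm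
          rw [Submodule.mem_dualCoannihilator] at hm' ⊢
          intro φ hφ
          have := hm' ⁅x, φ⁆ (Q.lie_mem hφ)
          rw [Module.Dual.lie_apply, neg_eq_zero] at this
          exact this }
    have hA : A.toSubmodule = Q.toSubmodule.dualCoannihilator := rfl
    have hQ : A.toSubmodule.dualAnnihilator = Q.toSubmodule := by
      rw [hA]; exact Subspace.dualCoannihilator_dualAnnihilator_eq
    rcases hV.eq_bot_or_eq_top A with h | h
    · right
      rw [h, LieSubmodule.bot_toSubmodule, Submodule.dualAnnihilator_bot] at hQ
      exact LieSubmodule.toSubmodule_injective (by rw [← hQ]; rfl)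
    · left
      rw [h, LieSubmodule.top_toSubmodule, Submodule.dualAnnihilator_top] at hQ
      exact LieSubmodule.toSubmodule_injective (by rw [← hQ]; rfl)
  have hnt : Nontrivial V := by
    by_contra hn
    rw [not_nontrivial_iff_subsingleton] at hn
    apply hV.bot_ne_top
    ext x
    simp [Subsingleton.elim x 0]
  have : Nontrivial (LieSubmodule ℂ L (V →ₗ[ℂ] ℂ)) := by
    refine ⟨⊥, ⊤, ?_⟩
    intro h
    obtain ⟨v, hv⟩ := exists_ne (0 : V)
    apply hv
    rw [← Module.forall_dual_apply_eq_zero_iff ℂ v]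
    intro φ
    have h1 : φ ∈ (⊤ : LieSubmodule ℂ L (V →ₗ[ℂ] ℂ)) := trivial
    rw [← h] at h1
    have h2 : φ = 0 := by simpa using h1
    rw [h2]; rfl
  exact ⟨hco⟩

lemma eps_W {μ : Dual ℂ H} {ε : V →ₗ[ℂ] ℂ} (h : ∀ (h : H) x, ε ⁅(h : L), x⁆ = μ h * ε x) :
    IsW H (-μ) ε := by
  intro y
  ext x
  rw [Module.Dual.lie_apply, h]; simp

lemma eps_S {ε : V →ₗ[ℂ] ℂ}
    (h : ∀ χ, IsPosRoot H (-α) χ → ∀ x ∈ rootSpace H ⇑χ, ∀ y, ε ⁅x, y⁆ = 0) :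
    IsSing H (-α) ε := by
  intro χ hχ x hx
  ext y
  rw [Module.Dual.lie_apply, h χ hχ x hx]; simp

/-- existence of the equivariant map -/
lemma exists_Psi (t : TD H α hc e f)
    (hlaced : ∀ (χ ψ : Module.Dual ℂ H) (tχ tψ : H), IsRoot H χ → IsRoot H ψ →
      IsKillingDual H χ tχ → IsKillingDual H ψ tψ → χ tχ = ψ tψ)
    {μ lam : Dual ℂ H} [FiniteDimensional ℂ V]
    {W : Type} [AddCommGroup W] [Module ℂ W] [LieRingModule L W] [LieModule ℂ L W]
    [FiniteDimensional ℂ W]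
    (hV : IsSimpleOrder (LieSubmodule ℂ L V)) (hW : IsSimpleOrder (LieSubmodule ℂ L W))
    {v : V} {w : W} (hv0 : v ≠ 0) (hw0 : w ≠ 0) (hvw : IsW H μ v) (hww : IsW H lam w)
    (hvs : IsSing H α v) (hws : IsSing H α w) (hβ : IsRoot H (lam - μ)) :
    ∃ Ψ : W →ₗ⁅ℂ, L⁆ ((V →ₗ[ℂ] ℂ) →ₗ[ℂ] L), Ψ ≠ 0 := by
  obtain ⟨ε, hε1, hεH, hεn⟩ := exists_eps t.base hvw hvs (gen_of_simple hV hv0) hv0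
  obtain ⟨θ, hθ1, hθH, hθn⟩ := exists_eps t.base hww hws (gen_of_simple hW hw0) hw0
  obtain ⟨xb, hxb0, hxb⟩ : ∃ x : L, x ≠ 0 ∧ x ∈ rootSpace H ⇑(lam - μ) := by
    by_contra hcon
    push Not at hcon
    refine hβ.2 ((LieSubmodule.eq_bot_iff _).mpr fun x hx => ?_)
    by_contra h0
    exact hcon x h0 hx
  have hε0 : ε ≠ 0 := by
    rintro rfl
    simp at hε1
  have hwt : -lam + (lam - μ) = -μ := by abel
  obtain ⟨φ, hφ1, hφ2⟩ := thmA t.neg (lam := -lam) hxb (eps_W hθH) (eps_S hθn)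
    (Module.Dual.eval ℂ W w) (by simpa using hθ1)
    (by
      intro χ hχ x hx y
      rw [neg_neg] at hχ
      rw [Module.Dual.eval_apply, Module.Dual.lie_apply, hws χ hχ x hx, map_zero, neg_zero])
    (dual_simple hV) hε0 (by rw [hwt]; exact eps_W hεH) (eps_S hεn)
    (fun i => nil_of_findim (t.base.isRoot i) (t.e_mem i) (eps_W hεH))
    (by
      intro i
      obtain ⟨k, hk, -⟩ := dom_of_nil t i hv0 hvw (hvs _ (t.pos_simple i) _ (t.e_mem i))
        (nil_of_findim (isRoot_neg (t.base.isRoot i)) (t.f_mem i) hvw)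
      obtain ⟨n, hn, -⟩ := dom_of_nil t i hw0 hww (hws _ (t.pos_simple i) _ (t.e_mem i))
        (nil_of_findim (isRoot_neg (t.base.isRoot i)) (t.f_mem i) hww)
      refine ⟨k, by rw [hwt]; simpa using hk, nil_bound t hlaced hβ hxb i (k := k) (n := n) ?_⟩
      rw [LinearMap.sub_apply, hn, hk])
  rw [neg_neg] at hφ2
  -- weight of `φ`
  have hgen : LieSubmodule.lieSpan ℂ L {ε} = (⊤ : LieSubmodule ℂ L (V →ₗ[ℂ] ℂ)) :=
    gen_of_simple (dual_simple hV) hε0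
  have hφs : IsSing H α φ := by
    intro χ hχ x hx
    ext y
    rw [LieHom.lie_apply, hφ2 χ hχ x hx, sub_self]; rfl
  have hφw : IsW H lam φ := by
    intro h
    let S : Submodule ℂ (V →ₗ[ℂ] ℂ) := LinearMap.ker (⁅(h : L), φ⁆ - lam h • φ)
    have hall : ∀ y, y ∈ S := by
      refine lemmaC t.neg.base (eps_W hεH) (eps_S hεn) hgen S ?_ ?_
      · rw [LinearMap.mem_ker, LinearMap.sub_apply, sub_eq_zero, LinearMap.smul_apply,
          LieHom.lie_apply, eps_W hεH h, map_smul, hφ1, mem_rs.mp hxb h, ← sub_smul]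
        congr 1
        simp
      · intro χ hχ x hx s hs
        rw [neg_neg] at hχ
        rw [LinearMap.mem_ker, LinearMap.sub_apply, sub_eq_zero, LinearMap.smul_apply,
          LieHom.lie_apply] at hs ⊢
        have hs' : ⁅(h : L), φ s⁆ = lam h • φ s + φ ⁅(h : L), s⁆ := by rw [← hs]; abel
        rw [leibniz_lie (h : L) x s, mem_rs.mp hx h, map_add, smul_lie, map_smul,
          hφ2 χ hχ x hx, hφ2 χ hχ x hx, leibniz_lie (h : L) x (φ s), mem_rs.mp hx h, hs',
          smul_lie, lie_add, lie_smul]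
        abel
    ext y
    have := hall y
    rw [LinearMap.mem_ker, LinearMap.sub_apply, sub_eq_zero] at this
    exact this
  obtain ⟨Ψ, hΨ⟩ := uni t hW hw0 hww hws
    (fun i => nil_of_findim (isRoot_neg (t.base.isRoot i)) (t.f_mem i) hww) (m := φ) hφw hφs
    (fun i => nil_of_findim (isRoot_neg (t.base.isRoot i)) (t.f_mem i) hφw)
  refine ⟨Ψ, ?_⟩
  intro h
  rw [h] at hΨ
  have : φ = 0 := by rw [← hΨ]; rfl
  rw [this] at hφ1
  exact hxb0 hφ1.symm

end dual

section contraction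

variable {L : Type} [LieRing L] [LieAlgebra ℂ L] [FiniteDimensional ℂ L]
  {V : Type} [AddCommGroup V] [Module ℂ V] [LieRingModule L V] [LieModule ℂ L V]
  [FiniteDimensional ℂ V]
  {U : Type} [AddCommGroup U] [Module ℂ U] [LieRingModule L U] [LieModule ℂ L U]
  [FiniteDimensional ℂ U]
  {W : Type} [AddCommGroup W] [Module ℂ W] [LieRingModule L W] [LieModule ℂ L W]
  [FiniteDimensional ℂ W]

/-- contraction of tensors against an invariant pairing -/
lemma exists_contraction (B : W →ₗ[ℂ] U →ₗ[ℂ] ℂ)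
    (h1 : ∀ w, (∀ v, B w v = 0) → w = 0) (h2 : ∀ v, (∀ w, B w v = 0) → v = 0)
    (h3 : ∀ (x : L) (w : W) (v : U), B ⁅x, w⁆ v + B w ⁅x, v⁆ = 0) :
    ∃ c : (L ⊗[ℂ] (V ⊗[ℂ] U)) →ₗ[ℂ] (W →ₗ[ℂ] (V →ₗ[ℂ] ℂ) →ₗ[ℂ] L),
      Function.Bijective c ∧ ∀ (y : L) t, c ⁅y, t⁆ = ⁅y, c t⁆ := by
  let pq : V ⊗[ℂ] U →ₗ[ℂ] (L →ₗ[ℂ] (W →ₗ[ℂ] (V →ₗ[ℂ] ℂ) →ₗ[ℂ] L)) :=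
    TensorProduct.lift (LinearMap.mk₂ ℂ
      (fun a b => LinearMap.mk₂ ℂ
        (fun (x : L) (w : W) => (B w b) • ((Module.Dual.eval ℂ V a).smulRight x :
            (V →ₗ[ℂ] ℂ) →ₗ[ℂ] L))
        (by intros; ext; simp) (by intros; ext; simp [smul_smul, mul_comm, mul_left_comm, mul_assoc])
        (by intros; ext; simp [add_smul])
        (by intros; ext; simp [smul_smul, mul_assoc]))
      (by intros; ext; simp [add_smul]) (by intros; ext; simp [smul_smul, mul_assoc, mul_left_comm])
      (by intros; ext; simp [add_smul]) (by intros; ext; simp [smul_smul, mul_assoc]))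
  let c : (L ⊗[ℂ] (V ⊗[ℂ] U)) →ₗ[ℂ] (W →ₗ[ℂ] (V →ₗ[ℂ] ℂ) →ₗ[ℂ] L) :=
    TensorProduct.lift pq.flip
  have hcap : ∀ x a b w ξ, c (x ⊗ₜ (a ⊗ₜ b)) w ξ = (B w b * ξ a) • x := by
    intro x a b w ξ
    simp [c, pq, smul_smul]
  have hBi : Function.Injective B := by
    rw [injective_iff_map_eq_zero]
    exact fun w hw => h1 w fun v => by rw [hw]; rfl
  have hBi2 : Function.Injective B.flip := by
    rw [injective_iff_map_eq_zero]
    exact fun u hu => h2 u fun w => by rw [← LinearMap.flip_apply, hu]; rfl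
  have hd1 : finrank ℂ W ≤ finrank ℂ U := by
    have := LinearMap.finrank_le_finrank_of_injective hBi
    rwa [Subspace.dual_finrank_eq] at this
  have hd2 : finrank ℂ U ≤ finrank ℂ W := by
    have := LinearMap.finrank_le_finrank_of_injective hBi2
    rwa [Subspace.dual_finrank_eq] at this
  have hd : finrank ℂ W = finrank ℂ U := le_antisymm hd1 hd2
  have hBs : Function.Surjective B :=
    (LinearMap.injective_iff_surjective_of_finrank_eq_finrank
      (by rw [Subspace.dual_finrank_eq, hd])).mp hBi
  have hsurj : Function.Surjective c := by
    intro Ψ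
    let bV := Module.finBasis ℂ V
    let bU := Module.finBasis ℂ U
    choose w hw using fun j => hBs (bU.coord j)
    refine ⟨∑ i, ∑ j, (Ψ (w j) (bV.coord i)) ⊗ₜ (bV i ⊗ₜ bU j), ?_⟩
    ext y ξ
    have hy : y = ∑ j, (B y (bU j)) • w j := by
      apply hBi
      refine bU.ext fun k => ?_
      simp [map_sum, hw, Finsupp.single_apply]
    have hξ : ξ = ∑ i, (ξ (bV i)) • bV.coord i := by
      refine bV.ext fun k => ?_
      simp [Finsupp.single_apply]
    simp only [map_sum, LinearMap.sum_apply, hcap]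
    conv_rhs => rw [hξ, hy]
    simp only [map_sum, map_smul, LinearMap.sum_apply, LinearMap.smul_apply, Finset.smul_sum]
    simp only [smul_smul]
    refine Finset.sum_congr rfl fun i _ => Finset.sum_congr rfl fun j _ => ?_
    rw [mul_comm]
  refine ⟨c, ⟨?_, hsurj⟩, ?_⟩
  · refine (LinearMap.injective_iff_surjective_of_finrank_eq_finrank ?_).mpr hsurj
    simp only [finrank_tensorProduct, finrank_linearMap, finrank_self, hd]
    ring
  · intro y t
    induction t using TensorProduct.induction_on with
    | zero => simp
    | add t s ht hs => rw [lie_add, map_add, map_add, lie_add, ht, hs]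
    | tmul x q =>
      induction q using TensorProduct.induction_on with
      | zero => simp
      | add t s ht hs => rw [TensorProduct.tmul_add, lie_add, map_add, map_add, lie_add, ht, hs]
      | tmul a b =>
        ext w ξ
        have h3' : B w ⁅y, b⁆ = - B ⁅y, w⁆ b := by
          rw [eq_neg_iff_add_eq_zero, add_comm]; exact h3 y w b
        rw [TensorProduct.LieModule.lie_tmul_right, TensorProduct.LieModule.lie_tmul_right,
          LieHom.lie_apply, LinearMap.sub_apply, LieHom.lie_apply, TensorProduct.tmul_add,
          map_add, map_add, LinearMap.add_apply, LinearMap.add_apply, LinearMap.add_apply,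
          LinearMap.add_apply, hcap, hcap, hcap, hcap, hcap, hcap, h3', Module.Dual.lie_apply,
          lie_smul]
        module

end contraction

section final

variable {L : Type} [LieRing L] [LieAlgebra ℂ L] [FiniteDimensional ℂ L] [LieAlgebra.IsKilling ℂ L]
  {H : LieSubalgebra ℂ L} [H.IsCartanSubalgebra] {r : ℕ} {α : Fin r → Dual ℂ H}
  {hc : Fin r → H} {e f : Fin r → L}
  {V : Type} [AddCommGroup V] [Module ℂ V] [LieRingModule L V] [LieModule ℂ L V]

lemma main_dim (t : TD H α hc e f)
    (hlaced : ∀ (χ ψ : Module.Dual ℂ H) (tχ tψ : H), IsRoot H χ → IsRoot H ψ →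
      IsKillingDual H χ tχ → IsKillingDual H ψ tψ → χ tχ = ψ tψ)
    {μ lam : Dual ℂ H} [FiniteDimensional ℂ V]
    {W : Type} [AddCommGroup W] [Module ℂ W] [LieRingModule L W] [LieModule ℂ L W]
    [FiniteDimensional ℂ W]
    {U : Type} [AddCommGroup U] [Module ℂ U] [LieRingModule L U] [LieModule ℂ L U]
    [FiniteDimensional ℂ U]
    (hV : IsSimpleOrder (LieSubmodule ℂ L V)) (hW : IsSimpleOrder (LieSubmodule ℂ L W))
    {v : V} {w : W} (hv0 : v ≠ 0) (hw0 : w ≠ 0) (hvw : IsW H μ v) (hww : IsW H lam w)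
    (hvs : IsSing H α v) (hws : IsSing H α w) (hβ : IsRoot H (lam - μ))
    (hdual : IsDualPair (L := L) W U) :
    Module.finrank ℂ (maxTrivSubmodule ℂ L (L ⊗[ℂ] (V ⊗[ℂ] U))) = 1 := by
  obtain ⟨B, hB1, hB2, hB3⟩ := hdual
  obtain ⟨c, hcb, hce⟩ := exists_contraction (V := V) B hB1 hB2 hB3
  obtain ⟨ε, hε1, hεH, hεn⟩ := exists_eps t.base hvw hvs (gen_of_simple hV hv0) hv0
  have hε0 : ε ≠ 0 := by
    rintro rfl
    simp at hε1
  have hgen : LieSubmodule.lieSpan ℂ L {ε} = (⊤ : LieSubmodule ℂ L (V →ₗ[ℂ] ℂ)) :=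
    gen_of_simple (dual_simple hV) hε0
  have hinv : ∀ s ∈ maxTrivSubmodule ℂ L (L ⊗[ℂ] (V ⊗[ℂ] U)), ∀ (y : L) (a : W) (ξ : V →ₗ[ℂ] ℂ),
      ⁅y, c s a ξ⁆ = c s a ⁅y, ξ⁆ + c s ⁅y, a⁆ ξ := by
    intro s hs y a ξ
    have h1 : ⁅y, c s⁆ = 0 := by
      rw [← hce, (mem_maxTrivSubmodule ℂ L _ s).mp hs y, map_zero]
    have h2 := congrArg (fun g => g a ξ) h1
    simp only [LieHom.lie_apply, LinearMap.sub_apply, LinearMap.zero_apply] at h2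
    rw [sub_sub, sub_eq_zero] at h2
    exact h2
  have hmem : ∀ s ∈ maxTrivSubmodule ℂ L (L ⊗[ℂ] (V ⊗[ℂ] U)),
      c s w ε ∈ rootSpace H ⇑(lam - μ) := by
    intro s hs
    rw [mem_rs]
    intro h
    rw [hinv s hs, hww h, eps_W hεH h, map_smul, map_smul, LinearMap.smul_apply, ← add_smul]
    congr 1
    simp only [LinearMap.neg_apply, LinearMap.sub_apply]
    ring
  have hzero : ∀ s ∈ maxTrivSubmodule ℂ L (L ⊗[ℂ] (V ⊗[ℂ] U)), c s w ε = 0 → s = 0 := by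
    intro s hs h0
    have hw' : c s w = 0 := by
      ext ξ
      refine lemmaC t.neg.base (eps_W hεH) (eps_S hεn) hgen (LinearMap.ker (c s w)) h0 ?_ ξ
      intro χ hχ x hx ζ hζ
      rw [neg_neg] at hχ
      rw [LinearMap.mem_ker] at hζ ⊢
      have := hinv s hs x w ζ
      rw [hζ, lie_zero, hws χ hχ x hx, map_zero, LinearMap.zero_apply, add_zero] at this
      exact this.symm
    have hcs : c s = 0 := by
      let Q : LieSubmodule ℂ L W :=
        { LinearMap.ker (c s) with
          lie_mem := by
            intro x m hm
            have hm' : c s m = 0 := hm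
            change c s ⁅x, m⁆ = 0
            ext ξ
            have := hinv s hs x m ξ
            rw [hm', LinearMap.zero_apply, lie_zero, LinearMap.zero_apply, zero_add] at this
            exact this.symm }
      have hwQ : w ∈ Q := hw'
      rcases hW.eq_bot_or_eq_top Q with h | h
      · rw [h] at hwQ
        exact absurd (by simpa using hwQ) hw0
      · ext1 a
        have : a ∈ Q := by rw [h]; trivial
        exact this
    exact hcb.1 (by rw [hcs, map_zero])
  obtain ⟨Ψ, hΨ⟩ := exists_Psi t hlaced hV hW hv0 hw0 hvw hww hvs hws hβ
  obtain ⟨s, hs⟩ := hcb.2 (Ψ : W →ₗ[ℂ] (V →ₗ[ℂ] ℂ) →ₗ[ℂ] L)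
  have hsm : s ∈ maxTrivSubmodule ℂ L (L ⊗[ℂ] (V ⊗[ℂ] U)) := by
    rw [mem_maxTrivSubmodule]
    intro x
    apply hcb.1
    rw [hce, hs, map_zero]
    ext1 a
    rw [LieHom.lie_apply]
    change ⁅x, Ψ a⁆ - Ψ ⁅x, a⁆ = 0
    rw [LieModuleHom.map_lie, sub_self]
  have hs0 : s ≠ 0 := by
    rintro rfl
    apply hΨ
    ext1 a
    have := congrArg (fun g => g a) hs
    rw [map_zero] at this
    exact this.symm
  refine (finrank_eq_one_iff_of_nonzero' (⟨s, hsm⟩ : maxTrivSubmodule ℂ L (L ⊗[ℂ] (V ⊗[ℂ] U)))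
    (fun h => hs0 (congrArg Subtype.val h))).mpr ?_
  rintro ⟨s', hs'⟩
  obtain ⟨a, ha⟩ := rs_one_dim hβ (hmem s hsm) (hmem s' hs') (fun h => hs0 (hzero s hsm h))
  refine ⟨a, Subtype.ext ?_⟩
  have := hzero (s' - a • s) (sub_mem hs' (Submodule.smul_mem _ a hsm))
    (by simp [ha])
  exact (sub_eq_zero.mp this).symm

end final

/-- If `𝔤` is simply laced (all roots have the same Killing length) and
`ν̄ - μ` is a root, then the `𝔤`-invariant subspace of `adj(𝔤) ⊗ V_μ ⊗ V_ν` has dimension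
exactly `1`. -/
theorem statement3
    {L : Type} [LieRing L] [LieAlgebra ℂ L] [FiniteDimensional ℂ L]
    [LieAlgebra.IsSemisimple ℂ L]
    (H : LieSubalgebra ℂ L) [H.IsCartanSubalgebra]
    {r : ℕ} (α : Fin r → Module.Dual ℂ H) (hc : Fin r → H)
    (hbase : IsBase H α) (hcoroot : ∀ j, IsCoroot H (α j) (hc j))
    (hlaced : ∀ (χ ψ : Module.Dual ℂ H) (tχ tψ : H), IsRoot H χ → IsRoot H ψ →
      IsKillingDual H χ tχ → IsKillingDual H ψ tψ → χ tχ = ψ tψ)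
    (μ ν νbar : Module.Dual ℂ H) (hμ : IsDomInt hc μ) (hν : IsDomInt hc ν)
    (Vμ : Type) [AddCommGroup Vμ] [Module ℂ Vμ] [LieRingModule L Vμ]
    [LieModule ℂ L Vμ] [FiniteDimensional ℂ Vμ]
    (Vν : Type) [AddCommGroup Vν] [Module ℂ Vν] [LieRingModule L Vν]
    [LieModule ℂ L Vν] [FiniteDimensional ℂ Vν]
    (Wν : Type) [AddCommGroup Wν] [Module ℂ Wν] [LieRingModule L Wν]
    [LieModule ℂ L Wν] [FiniteDimensional ℂ Wν]
    (hVμ : IsHWIrrep H α μ Vμ)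
    (hVν : IsHWIrrep H α ν Vν) (hWν : IsHWIrrep H α νbar Wν)
    (hdual : IsDualPair (L := L) Wν Vν)
    (hroot : IsRoot H (νbar - μ)) :
    Module.finrank ℂ (maxTrivSubmodule ℂ L (L ⊗[ℂ] (Vμ ⊗[ℂ] Vν))) = 1 := by
  have hK : LieAlgebra.IsKilling ℂ L := inferInstance
  choose htwo e he f hf hef using hcoroot
  have t : TD H α hc e f := ⟨hbase, he, hf, fun i => (hef i).symm, htwo⟩
  obtain ⟨hV, v, hv0, hvw, hvs⟩ := hVμ
  obtain ⟨hW, w, hw0, hww, hws⟩ := hWν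
  exact main_dim t hlaced hV hW hv0 hw0 hvw hww hvs hws hroot hdual

end AdjPaper
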